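/- arXiv:1606.08818 — 3 statements merged into one kernel-verified Lean document; each statement's English description precedes it below -/
import Mathlib

section
/- For p > 0 write I_n^p := diag(p, 1, …, 1) ∈ Sym(ℝ^{n+1}). For every A ∈ Sym(ℝ^{n+1}) \ S, Θ̃(A) = lim_{p→∞} Σ_j arctan( λ_j(I_n^p A I_n^p) ), where λ_1(·), …, λ_{n+1}(·) denote the eigenvalues (with multiplicity) of the real symmetric matrix I_n^p A I_n^p. -/
open Real Filter Matrix

noncomputable section

/-- The Hessian matrix of a function `v : ℝ^m → ℝ` at `x`. -/
def hessianMatrix {m : ℕ} (v : (Fin m → ℝ) → ℝ) (x : Fin m → ℝ) :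
    Matrix (Fin m) (Fin m) ℝ :=
  Matrix.of fun i j => iteratedFDeriv ℝ 2 v x ![Pi.single i 1, Pi.single j 1]

/-- The lifted Lagrangian angle θ̃(A) = ∑ arctan λ_j(A) of a real symmetric matrix. -/
def liftedAngle {m : ℕ} (A : Matrix (Fin m) (Fin m) ℝ) : ℝ :=
  if h : A.IsHermitian then ∑ j, Real.arctan (h.eigenvalues j) else 0

/-- The Harvey–Lawson branches `F_c` of the special Lagrangian subequation. -/
def Fc (m : ℕ) (c : ℝ) : Set (Matrix (Fin m) (Fin m) ℝ) :=
  {A | A.IsSymm ∧ c ≤ liftedAngle A}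

/-- `I_n = diag(0,1,…,1)` as a complex `(n+1)×(n+1)` matrix. -/
def Inmat (n : ℕ) : Matrix (Fin (n+1)) (Fin (n+1)) ℂ :=
  Matrix.diagonal fun i => if i = 0 then 0 else 1

/-- The complex matrix `I_n + i A`. -/
def cmat {n : ℕ} (A : Matrix (Fin (n+1)) (Fin (n+1)) ℝ) :
    Matrix (Fin (n+1)) (Fin (n+1)) ℂ :=
  Inmat n + Complex.I • A.map (fun a => (a : ℂ))

open Classical in
/-- The lifted space-time Lagrangian angle Θ̃, summing `Complex.arg` (with values in
`(-π, π]`) over the roots (with multiplicity) of the characteristic polynomial of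
`I_n + i A`, shifted by `π/2` over the singular set `S = {det (I_n + iA) = 0}` where only
the nonzero roots are counted. -/
def spaceTimeAngle {n : ℕ} (A : Matrix (Fin (n+1)) (Fin (n+1)) ℝ) : ℝ :=
  if (cmat A).det = 0 then
    π / 2 + ((((cmat A).charpoly.roots).filter (fun z => z ≠ 0)).map Complex.arg).sum
  else (((cmat A).charpoly.roots).map Complex.arg).sum

/-- The degenerate special Lagrangian subequation `ℱ_c ⊂ Sym(ℝ^{n+1})`. -/
def calF (n : ℕ) (c : ℝ) : Set (Matrix (Fin (n+1)) (Fin (n+1)) ℝ) :=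
  {A | A.IsSymm ∧ c ≤ spaceTimeAngle A}

/-- Interior of a set of symmetric matrices, relative to the symmetric matrices. -/
def symInterior {m : ℕ} (F : Set (Matrix (Fin m) (Fin m) ℝ)) :
    Set (Matrix (Fin m) (Fin m) ℝ) :=
  {A | A.IsSymm ∧ ∀ᶠ B in nhds A, B.IsSymm → B ∈ F}

/-- The dual subequation `F̃ = (−Int F)ᶜ` (within the symmetric matrices). -/
def dualSub {m : ℕ} (F : Set (Matrix (Fin m) (Fin m) ℝ)) :
    Set (Matrix (Fin m) (Fin m) ℝ) :=
  {A | A.IsSymm ∧ -A ∉ symInterior F}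

/-- An `EReal`-valued (i.e. `[−∞,∞)`-valued) function is subaffine on `U` if, for every
affine function `a` and compact `K ⊆ U`, `u ≤ a` on `∂K` implies `u ≤ a` on `K`. -/
def IsSubaffine {m : ℕ} (U : Set (Fin m → ℝ)) (u : (Fin m → ℝ) → EReal) : Prop :=
  ∀ (a : (Fin m → ℝ) →ᵃ[ℝ] ℝ) (K : Set (Fin m → ℝ)), IsCompact K → K ⊆ U →
    (∀ x ∈ frontier K, u x ≤ (a x : EReal)) → ∀ x ∈ K, u x ≤ (a x : EReal)

/-- `u` is of type `F` on `U` (i.e. `u ∈ F(U)`): `u` is `[−∞,∞)`-valued, upper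
semicontinuous on `U`, and `u + v` is subaffine on `U` for every `C²` function `v`
whose Hessian lies in the dual subequation `F̃` at every point of `U`. -/
def IsTypeF {m : ℕ} (F : Set (Matrix (Fin m) (Fin m) ℝ)) (U : Set (Fin m → ℝ))
    (u : (Fin m → ℝ) → EReal) : Prop :=
  (∀ x ∈ U, u x ≠ ⊤) ∧ UpperSemicontinuousOn u U ∧
    ∀ v : (Fin m → ℝ) → ℝ, ContDiffOn ℝ 2 v U →
      (∀ x ∈ U, hessianMatrix v x ∈ dualSub F) →
      IsSubaffine U (fun x => u x + ((v x : ℝ) : EReal))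

/-- The lower-right `n×n` block `A⁺` of an `(n+1)×(n+1)` matrix. -/
def Aplus {n : ℕ} (A : Matrix (Fin (n+1)) (Fin (n+1)) ℝ) : Matrix (Fin n) (Fin n) ℝ :=
  Matrix.of fun i j => A i.succ j.succ

end

/-- `I_n^p = diag(p, 1, …, 1)`. -/
def Inp (n : ℕ) (p : ℝ) : Matrix (Fin (n+1)) (Fin (n+1)) ℝ :=
  Matrix.diagonal fun i => if i = 0 then p else 1


open Topology

/-- A continuous real function on a preconnected set, constant as an angle, is constant. -/
lemma const_of_angle {α : Type*} [TopologicalSpace α] {S : Set α} (hS : IsPreconnected S)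
    {f : α → ℝ} (hf : ContinuousOn f S) {a : Real.Angle} (ha : ∀ x ∈ S, (f x : Real.Angle) = a)
    {x y : α} (hx : x ∈ S) (hy : y ∈ S) : f x = f y := by
  have hd : IsDiscrete (Set.range (Int.cast : ℤ → ℝ)) :=
    ⟨Int.isClosedEmbedding_coe_real.isEmbedding.toHomeomorph.symm.isEmbedding.discreteTopology⟩
  have hc : ContinuousOn (fun z => (f z - f x) / (2 * π)) S := by fun_prop
  have hm : Set.MapsTo (fun z => (f z - f x) / (2 * π)) S (Set.range (Int.cast : ℤ → ℝ)) := by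
    intro z hz
    obtain ⟨k, hk⟩ := Real.Angle.angle_eq_iff_two_pi_dvd_sub.1 ((ha z hz).trans (ha x hx).symm)
    refine ⟨k, ?_⟩
    simp only [hk]
    field_simp
  obtain ⟨c, -, hcc⟩ := hS.eqOn_const_of_mapsTo hd hc hm ⟨_, ⟨0, rfl⟩⟩
  have h1 := hcc hx
  have h2 := hcc hy
  simp only [sub_self, zero_div, Function.const_apply] at h1 h2
  rw [← h1] at h2
  have : (2 * π) ≠ 0 := by positivity
  have h3 := (div_eq_zero_iff.1 h2).resolve_right this
  linarith

lemma arg_prod_angle (s : Multiset ℂ) (hs : ∀ z ∈ s, z ≠ 0) :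
    (((s.map Complex.arg).sum : ℝ) : Real.Angle) = (Complex.arg s.prod : Real.Angle) := by
  induction s using Multiset.induction_on with
  | empty => simp
  | cons a s ih =>
    have h1 : a ≠ 0 := hs a (by simp)
    have h2 : ∀ z ∈ s, z ≠ 0 := fun z hz => hs z (by simp [hz])
    have h3 : s.prod ≠ 0 := by
      rw [Ne, Multiset.prod_eq_zero_iff]
      exact fun h => h2 0 h rfl
    rw [Multiset.map_cons, Multiset.sum_cons, Multiset.prod_cons,
      Complex.arg_mul_coe_angle h1 h3, Real.Angle.coe_add, ih h2]

lemma arctan_eq_arg' (l : ℝ) : Real.arctan l = Complex.arg (1 + Complex.I * l) := by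
  have h : |Complex.arg (1 + Complex.I * l)| < π / 2 := by
    rw [Complex.abs_arg_lt_pi_div_two_iff]
    left; simp
  have h2 := Complex.tan_arg (1 + Complex.I * l)
  rw [abs_lt] at h
  rw [← Real.arctan_tan h.1 h.2, h2]
  simp

/-- the path matrix `diag d + iA` -/
def pathMat {m : ℕ} (d : Fin m → ℝ) (A : Matrix (Fin m) (Fin m) ℝ) : Matrix (Fin m) (Fin m) ℂ :=
  Matrix.diagonal (fun i => (d i : ℂ)) + Complex.I • A.map (fun a => (a : ℂ))

lemma det_one_add {m : ℕ} {B : Matrix (Fin m) (Fin m) ℝ} (hB : B.IsHermitian) (s : ℝ) :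
    (pathMat (fun _ => 1) (s • B)).det = ∏ j, (1 + Complex.I * ((s * hB.eigenvalues j : ℝ) : ℂ)) := by
  have h := hB.spectral_theorem
  rw [Unitary.conjStarAlgAut_apply] at h
  set U : Matrix (Fin m) (Fin m) ℝ := (hB.eigenvectorUnitary : Matrix (Fin m) (Fin m) ℝ) with hU
  have hUU : U * star U = 1 := Unitary.coe_mul_star_self hB.eigenvectorUnitary
  let φ : Matrix (Fin m) (Fin m) ℝ →+* Matrix (Fin m) (Fin m) ℂ := Complex.ofRealHom.mapMatrix
  have hφ : φ U * φ (star U) = 1 := by rw [← map_mul, hUU, map_one]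
  have e : pathMat (fun _ => 1) (s • B) =
      φ U * Matrix.diagonal (fun j => (1 + Complex.I * ((s * hB.eigenvalues j : ℝ) : ℂ))) * φ (star U) := by
    have e1 : Matrix.diagonal (fun j => (1 + Complex.I * ((s * hB.eigenvalues j : ℝ) : ℂ))) =
        (1 : Matrix (Fin m) (Fin m) ℂ) + (Complex.I * s) • φ (Matrix.diagonal (RCLike.ofReal ∘ hB.eigenvalues)) := by
      ext i j
      by_cases hij : i = j
      · subst hij; simp [φ]; ring
      · simp [φ, hij]
    rw [e1, mul_add, add_mul, mul_one, hφ, Matrix.mul_smul, Matrix.smul_mul, ← map_mul, ← map_mul, ← h]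
    ext i j
    by_cases hij : i = j
    · subst hij; simp [φ, pathMat]; ring
    · simp [φ, hij, pathMat]; ring
  rw [e, Matrix.det_mul, Matrix.det_mul, mul_right_comm, ← Matrix.det_mul, hφ, Matrix.det_one, one_mul,
    Matrix.det_diagonal]

lemma one_add_ne (x : ℝ) : (1 + Complex.I * (x : ℂ)) ≠ 0 := by
  intro h
  simpa using congrArg Complex.re h

lemma det_one_add_ne {m : ℕ} {B : Matrix (Fin m) (Fin m) ℝ} (hB : B.IsHermitian) (s : ℝ) :
    (pathMat (fun _ => 1) (s • B)).det ≠ 0 := by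
  rw [det_one_add hB]
  exact Finset.prod_ne_zero_iff.2 fun j _ => one_add_ne _

lemma angle_scale {m : ℕ} {B : Matrix (Fin m) (Fin m) ℝ} (hB : B.IsHermitian) (s : ℝ) :
    ((∑ j, Real.arctan (s * hB.eigenvalues j) : ℝ) : Real.Angle) =
      (Complex.arg (pathMat (fun _ => 1) (s • B)).det : Real.Angle) := by
  rw [det_one_add hB]
  have := arg_prod_angle (Finset.univ.val.map fun j => 1 + Complex.I * ((s * hB.eigenvalues j : ℝ) : ℂ))
    (by simp only [Multiset.mem_map]; rintro z ⟨j, -, rfl⟩; exact one_add_ne _)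
  rw [Multiset.map_map] at this
  simp only [Function.comp_def, ← arctan_eq_arg'] at this
  exact this

lemma arg_div_angle {x y : ℂ} (hx : x ≠ 0) (hy : y ≠ 0) :
    (Complex.arg (x / y) : Real.Angle) = Complex.arg x - Complex.arg y := by
  have := Complex.arg_mul_coe_angle (div_ne_zero hx hy) hy
  rw [div_mul_cancel₀ _ hy] at this
  rw [this]; simp

lemma continuous_det_pathMat {m : ℕ} :
    Continuous fun q : (Fin m → ℝ) × Matrix (Fin m) (Fin m) ℝ => (pathMat q.1 q.2).det := by
  unfold pathMat
  refine Continuous.matrix_det ?_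
  refine Continuous.add ?_ ?_
  · refine Continuous.matrix_diagonal ?_
    fun_prop
  · refine Continuous.const_smul (g := fun q : (Fin m → ℝ) × Matrix (Fin m) (Fin m) ℝ =>
      q.2.map (fun a => (a : ℂ))) ?_ Complex.I
    have h : Continuous fun q : (Fin m → ℝ) × Matrix (Fin m) (Fin m) ℝ => q.2 := continuous_snd
    refine continuous_pi fun i => continuous_pi fun j => ?_
    exact Complex.continuous_ofReal.comp (h.matrix_elem i j)

lemma liftedAngle_continuousOn {m : ℕ} :
    ContinuousOn (liftedAngle (m := m)) {B | B.IsHermitian} := by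
  intro B0 hB0
  have hB0 : B0.IsHermitian := hB0
  set F : Matrix (Fin m) (Fin m) ℝ → ℝ → ℂ := fun B s =>
    (pathMat (fun _ => 1) (s • B)).det / (pathMat (fun _ => 1) (s • B0)).det with hF
  have hFc : ∀ s0 : ℝ, ∀ B, ContinuousAt (fun q : Matrix (Fin m) (Fin m) ℝ × ℝ => F q.1 q.2) (B, s0) := by
    intro s0 B
    simp only [hF]
    refine ContinuousAt.div ?_ ?_ (det_one_add_ne hB0 s0)
    · exact (continuous_det_pathMat.comp (f := fun q : Matrix (Fin m) (Fin m) ℝ × ℝ =>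
        ((fun _ => (1:ℝ)), q.2 • q.1)) (by fun_prop)).continuousAt
    · exact (continuous_det_pathMat.comp (f := fun q : Matrix (Fin m) (Fin m) ℝ × ℝ =>
        ((fun _ => (1:ℝ)), q.2 • B0)) (by fun_prop)).continuousAt
  have hF1 : ∀ s, F B0 s = 1 := fun s => div_self (det_one_add_ne hB0 s)
  have hev : ∀ᶠ B in 𝓝 B0, ∀ s ∈ Set.Icc (0:ℝ) 1, F B s ∈ Complex.slitPlane := by
    refine isCompact_Icc.eventually_forall_of_forall_eventually fun s _ => ?_
    refine (hFc s B0).eventually_mem (Complex.isOpen_slitPlane.mem_nhds ?_)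
    simp only [hF1]; simp
  have key : ∀ᶠ B in 𝓝[{B | B.IsHermitian}] B0,
      liftedAngle B = liftedAngle B0 + Complex.arg (F B 1) := by
    filter_upwards [nhdsWithin_le_nhds hev, self_mem_nhdsWithin] with B hBs hB
    have hB : B.IsHermitian := hB
    have hc : ContinuousOn (fun s : ℝ => (∑ j, Real.arctan (s * hB.eigenvalues j)) -
        (∑ j, Real.arctan (s * hB0.eigenvalues j)) - Complex.arg (F B s)) (Set.Icc 0 1) := by
      refine ContinuousOn.sub (by fun_prop) ?_
      intro s hs
      refine ((Complex.continuousAt_arg (hBs s hs)).comp (f := fun s => F B s) ?_).continuousWithinAt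
      exact (hFc s B).comp (f := fun s => (B, s)) (by fun_prop)
    have := const_of_angle (isPreconnected_Icc) hc (a := 0) (fun s hs => by
      rw [Real.Angle.coe_sub, Real.Angle.coe_sub, angle_scale, angle_scale,
        arg_div_angle (det_one_add_ne hB s) (det_one_add_ne hB0 s), sub_self])
      (x := 1) (y := 0) (by simp) (by simp)
    have h0 : F B 0 = 1 := by
      simp only [hF, zero_smul]
      exact div_self (by simpa using det_one_add_ne hB0 0)
    simp [h0] at this
    simp only [liftedAngle, dif_pos hB, dif_pos hB0]
    linarith
  have lim : Tendsto (fun B => liftedAngle B0 + Complex.arg (F B 1)) (𝓝[{B | B.IsHermitian}] B0)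
      (𝓝 (liftedAngle B0 + Complex.arg (F B0 1))) := by
    refine tendsto_nhdsWithin_of_tendsto_nhds (tendsto_const_nhds.add ?_)
    refine (Complex.continuousAt_arg (by rw [hF1]; simp)).comp (f := fun B => F B 1) ?_
    exact (hFc 1 B0).comp (f := fun B => (B, (1:ℝ))) (by fun_prop)
  rw [hF1] at lim
  simp only [Complex.arg_one, add_zero] at lim
  exact lim.congr' (key.mono fun B h => h.symm)

/-- the scaled matrix `D^{-1/2} A D^{-1/2}` -/
noncomputable def scaleMat {m : ℕ} (A : Matrix (Fin m) (Fin m) ℝ) (d : Fin m → ℝ) :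
    Matrix (Fin m) (Fin m) ℝ :=
  Matrix.diagonal (fun i => 1 / √(d i)) * A * Matrix.diagonal (fun i => 1 / √(d i))

lemma scaleMat_apply {m : ℕ} (A : Matrix (Fin m) (Fin m) ℝ) (d : Fin m → ℝ) (i j : Fin m) :
    scaleMat A d i j = 1 / √(d i) * A i j * (1 / √(d j)) := by
  simp [scaleMat]

lemma scaleMat_herm {m : ℕ} {A : Matrix (Fin m) (Fin m) ℝ} (hA : A.IsSymm) (d : Fin m → ℝ) :
    (scaleMat A d).IsHermitian := by
  ext i j
  rw [Matrix.conjTranspose_apply, scaleMat_apply, scaleMat_apply, hA.apply i j]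
  simp; ring

lemma scaleMat_cont {m : ℕ} {A : Matrix (Fin m) (Fin m) ℝ} (hA : A.IsSymm) :
    ContinuousOn (fun d => liftedAngle (scaleMat A d)) {d | ∀ i, 0 < d i} := by
  refine liftedAngle_continuousOn.comp (f := scaleMat A) ?_ (fun d _ => scaleMat_herm hA d)
  refine continuousOn_pi.2 fun i => continuousOn_pi.2 fun j => ?_
  simp only [scaleMat_apply]
  have : ∀ i, ContinuousOn (fun d : Fin m → ℝ => 1 / √(d i)) {d | ∀ i, 0 < d i} := by
    intro i
    refine ContinuousOn.div (by fun_prop) (by fun_prop) fun d hd => ?_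
    exact (Real.sqrt_pos.2 (hd i)).ne'
  exact ((this i).mul continuousOn_const).mul (this j)

lemma scaleMat_det {m : ℕ} (A : Matrix (Fin m) (Fin m) ℝ) {d : Fin m → ℝ} (hd : ∀ i, 0 < d i) :
    (pathMat d A).det = ((∏ i, d i : ℝ) : ℂ) * (pathMat (fun _ => 1) (scaleMat A d)).det := by
  have e : pathMat d A = Matrix.diagonal (fun i => ((√(d i) : ℝ) : ℂ)) *
      pathMat (fun _ => 1) (scaleMat A d) * Matrix.diagonal (fun i => ((√(d i) : ℝ) : ℂ)) := by
    ext i j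
    rw [Matrix.mul_diagonal, Matrix.diagonal_mul]
    have h : ∀ i, ((√(d i) : ℝ) : ℂ) ≠ 0 := fun i => by
      exact_mod_cast (Real.sqrt_pos.2 (hd i)).ne'
    have h2 : ∀ i, ((√(d i) : ℝ) : ℂ) * ((√(d i) : ℝ) : ℂ) = d i := fun i => by
      exact_mod_cast Real.mul_self_sqrt (hd i).le
    have hi := h i
    have hj := h j
    simp only [pathMat, Matrix.add_apply, Matrix.smul_apply, Matrix.map_apply, scaleMat_apply]
    by_cases hij : i = j
    · subst hij
      simp only [Matrix.diagonal_apply_eq]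
      rw [← h2 i]
      push_cast
      simp only [smul_eq_mul]
      field_simp
    · simp only [Matrix.diagonal_apply_ne _ hij]
      push_cast
      simp only [smul_eq_mul, zero_add]
      field_simp
  rw [e, Matrix.det_mul, Matrix.det_mul, Matrix.det_diagonal, mul_right_comm, ← Finset.prod_mul_distrib]
  congr 1
  push_cast
  refine Finset.prod_congr rfl fun i _ => ?_
  exact_mod_cast Real.mul_self_sqrt (hd i).le

lemma scaleMat_angle {m : ℕ} {A : Matrix (Fin m) (Fin m) ℝ} (hA : A.IsSymm) {d : Fin m → ℝ}
    (hd : ∀ i, 0 < d i) :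
    (liftedAngle (scaleMat A d) : Real.Angle) = (Complex.arg (pathMat d A).det : Real.Angle) := by
  rw [scaleMat_det A hd, Complex.arg_real_mul _ (Finset.prod_pos fun i _ => hd i)]
  have := angle_scale (scaleMat_herm hA d) 1
  simp only [one_mul, one_smul] at this
  rw [← this, liftedAngle, dif_pos (scaleMat_herm hA d)]

lemma pathMat_det_ne {m : ℕ} {A : Matrix (Fin m) (Fin m) ℝ} (hA : A.IsSymm) {d : Fin m → ℝ}
    (hd : ∀ i, 0 < d i) : (pathMat d A).det ≠ 0 := by
  rw [scaleMat_det A hd]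
  refine mul_ne_zero ?_ (by simpa using det_one_add_ne (scaleMat_herm hA d) 1)
  exact_mod_cast (Finset.prod_pos fun i _ => hd i).ne'

lemma liftedAngle_zero {m : ℕ} : liftedAngle (0 : Matrix (Fin m) (Fin m) ℝ) = 0 := by
  have h : (0 : Matrix (Fin m) (Fin m) ℝ).IsHermitian := by simp [Matrix.IsHermitian]
  rw [liftedAngle, dif_pos h, h.eigenvalues_eq_zero_iff.2 rfl]
  simp

lemma scaleMat_limit {m : ℕ} {A : Matrix (Fin m) (Fin m) ℝ} (hA : A.IsSymm) (d : Fin m → ℝ) :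
    Tendsto (fun t : ℝ => liftedAngle (scaleMat A (fun i => d i + t))) atTop (𝓝 0) := by
  have h0 := (liftedAngle_continuousOn (m := m)) 0 (by simp [Matrix.IsHermitian])
  rw [ContinuousWithinAt, liftedAngle_zero] at h0
  refine h0.comp (tendsto_nhdsWithin_iff.2 ⟨?_, Eventually.of_forall fun t => scaleMat_herm hA _⟩)
  refine tendsto_pi_nhds.2 fun i => tendsto_pi_nhds.2 fun j => ?_
  simp only [scaleMat_apply]
  have : ∀ i, Tendsto (fun t : ℝ => 1 / √(d i + t)) atTop (𝓝 0) := by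
    intro i
    simp only [one_div]
    exact (Real.tendsto_sqrt_atTop.comp (tendsto_atTop_add_const_left _ _ tendsto_id)).inv_tendsto_atTop
  simpa using ((this i).mul_const (A i j)).mul (this j)

/-- base diagonal -/
def dstar (n : ℕ) : Fin (n+1) → ℝ := fun i => if i = 0 then 0 else 1

lemma dstar_nonneg {n : ℕ} (i : Fin (n+1)) : 0 ≤ dstar n i := by
  unfold dstar; split_ifs <;> simp

lemma cmat_eq {n : ℕ} (A : Matrix (Fin (n+1)) (Fin (n+1)) ℝ) : cmat A = pathMat (dstar n) A := by
  simp only [cmat, pathMat, Inmat, dstar]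
  congr 2
  ext i; split_ifs <;> simp

lemma pathMat_add {n : ℕ} (A : Matrix (Fin (n+1)) (Fin (n+1)) ℝ) (t : ℝ) :
    (pathMat (fun i => dstar n i + t) A).det =
      ((cmat A).charpoly.roots.map (fun z => z + (t : ℂ))).prod := by
  have h1 := (IsAlgClosed.splits (cmat A).charpoly).eval_eq_prod_roots_of_monic
    (Matrix.charpoly_monic _) (-(t : ℂ))
  rw [Matrix.eval_charpoly] at h1
  have e : pathMat (fun i => dstar n i + t) A = -(Matrix.scalar (Fin (n+1)) (-(t:ℂ)) - cmat A) := by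
    rw [cmat_eq]
    ext i j
    by_cases hij : i = j
    · subst hij; simp [pathMat]; ring
    · simp [pathMat, hij]
  rw [e, Matrix.det_neg, h1]
  have hc : Multiset.card (cmat A).charpoly.roots = Fintype.card (Fin (n+1)) := by
    rw [IsAlgClosed.card_roots_eq_natDegree, Matrix.charpoly_natDegree_eq_dim]
  rw [← hc, ← Multiset.card_map (fun z => -(t:ℂ) - z), ← Multiset.prod_map_neg, Multiset.map_map]
  congr 1
  refine Multiset.map_congr rfl fun z _ => ?_
  simp

lemma root_re {n : ℕ} {A : Matrix (Fin (n+1)) (Fin (n+1)) ℝ} (hA : A.IsSymm) {z : ℂ}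
    (hz : z ∈ (cmat A).charpoly.roots) : 0 ≤ z.re := by
  by_contra hneg
  push Not at hneg
  have h1 := (Polynomial.mem_roots'.1 hz).2
  rw [Polynomial.IsRoot, Matrix.eval_charpoly] at h1
  have hs : (A - z.im • (1 : Matrix (Fin (n+1)) (Fin (n+1)) ℝ)).IsSymm := by
    simp [Matrix.IsSymm, hA.eq]
  refine pathMat_det_ne hs (d := fun i => dstar n i + -z.re) (fun i => ?_) ?_
  · have := dstar_nonneg i
    linarith
  · have e : pathMat (fun i => dstar n i + -z.re)
        (A - z.im • (1 : Matrix (Fin (n+1)) (Fin (n+1)) ℝ)) =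
        -(Matrix.scalar (Fin (n+1)) z - cmat A) := by
      rw [cmat_eq]
      ext i j
      by_cases hij : i = j
      · subst hij
        simp only [pathMat, Matrix.add_apply, Matrix.diagonal_apply_eq, Matrix.smul_apply,
          Matrix.map_apply, Matrix.sub_apply, Matrix.one_apply_eq, Matrix.neg_apply,
          Matrix.scalar_apply, smul_eq_mul]
        conv_rhs => rw [← Complex.re_add_im z]
        push_cast
        ring
      · simp [pathMat, hij]
    rw [e, Matrix.det_neg, h1, mul_zero]

/-- the shifted angle -/
noncomputable def shiftAngle {n : ℕ} (A : Matrix (Fin (n+1)) (Fin (n+1)) ℝ) (t : ℝ) : ℝ :=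
  ((cmat A).charpoly.roots.map (fun z => Complex.arg (z + (t : ℂ)))).sum

lemma root_slit {n : ℕ} {A : Matrix (Fin (n+1)) (Fin (n+1)) ℝ} (hA : A.IsSymm)
    (hdet : (cmat A).det ≠ 0) {z : ℂ} (hz : z ∈ (cmat A).charpoly.roots) {t : ℝ} (ht : 0 ≤ t) :
    z + (t : ℂ) ∈ Complex.slitPlane := by
  have h1 := root_re hA hz
  have h0 : z ≠ 0 := by
    rintro rfl
    apply hdet
    rw [Matrix.det_eq_prod_roots_charpoly]
    exact Multiset.prod_eq_zero hz
  rw [Complex.mem_slitPlane_iff]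
  by_cases him : z.im = 0
  · left
    have : z.re ≠ 0 := fun h => h0 (Complex.ext h him)
    have : 0 < z.re := lt_of_le_of_ne h1 this.symm
    simp; linarith
  · right; simpa using him

lemma shiftAngle_cont {n : ℕ} {A : Matrix (Fin (n+1)) (Fin (n+1)) ℝ} (hA : A.IsSymm)
    (hdet : (cmat A).det ≠ 0) {t : ℝ} (ht : 0 ≤ t) : ContinuousAt (shiftAngle A) t := by
  refine tendsto_multiset_sum _ fun z hz => ?_
  exact (Complex.continuousAt_arg (root_slit hA hdet hz ht)).comp
    (f := fun t : ℝ => z + (t : ℂ)) (by fun_prop)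

lemma shiftAngle_lim {n : ℕ} (A : Matrix (Fin (n+1)) (Fin (n+1)) ℝ) :
    Tendsto (shiftAngle A) atTop (𝓝 0) := by
  have : Tendsto (shiftAngle A) atTop (𝓝 ((cmat A).charpoly.roots.map (fun _ => (0:ℝ))).sum) := by
    refine tendsto_multiset_sum _ fun z hz => ?_
    have h1 : Tendsto (fun t : ℝ => Complex.arg (1 + z * ((t⁻¹ : ℝ) : ℂ))) atTop (𝓝 0) := by
      have h2 : Tendsto (fun t : ℝ => 1 + z * ((t⁻¹ : ℝ) : ℂ)) atTop (𝓝 (1 + z * ((0 : ℝ) : ℂ))) :=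
        tendsto_const_nhds.add (tendsto_const_nhds.mul
          ((Complex.continuous_ofReal.tendsto 0).comp tendsto_inv_atTop_zero))
      simp only [Complex.ofReal_zero, mul_zero, add_zero] at h2
      have h3 := (Complex.continuousAt_arg (x := 1) (by simp)).tendsto.comp h2
      simpa [Function.comp_def] using h3
    refine h1.congr' ?_
    filter_upwards [eventually_gt_atTop 0] with t ht
    rw [← Complex.arg_real_mul _ ht]
    congr 1
    have : (t : ℂ) ≠ 0 := by exact_mod_cast ht.ne'
    push_cast
    field_simp
    ring
  simpa using this

lemma shiftAngle_angle {n : ℕ} {A : Matrix (Fin (n+1)) (Fin (n+1)) ℝ} (hA : A.IsSymm)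
    (hdet : (cmat A).det ≠ 0) {t : ℝ} (ht : 0 ≤ t) :
    (shiftAngle A t : Real.Angle) =
      (Complex.arg (pathMat (fun i => dstar n i + t) A).det : Real.Angle) := by
  rw [pathMat_add, ← arg_prod_angle, Multiset.map_map]
  · rfl
  · intro z hz
    obtain ⟨w, hw, rfl⟩ := Multiset.mem_map.1 hz
    exact Complex.slitPlane_ne_zero (root_slit hA hdet hw ht)

lemma dstar_add_pos {n : ℕ} {t : ℝ} (ht : 0 < t) (i : Fin (n+1)) : 0 < dstar n i + t := by
  have := dstar_nonneg i
  linarith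

lemma lifted_eq_shift {n : ℕ} {A : Matrix (Fin (n+1)) (Fin (n+1)) ℝ} (hA : A.IsSymm)
    (hdet : (cmat A).det ≠ 0) {t : ℝ} (ht : 0 < t) :
    liftedAngle (scaleMat A (fun i => dstar n i + t)) = shiftAngle A t := by
  set f : ℝ → ℝ := fun t => liftedAngle (scaleMat A (fun i => dstar n i + t)) - shiftAngle A t with hf
  have hc : ContinuousOn f (Set.Ioi 0) := by
    refine ContinuousOn.sub ?_ fun s hs => (shiftAngle_cont hA hdet (le_of_lt hs)).continuousWithinAt
    refine (scaleMat_cont hA).comp (f := fun t : ℝ => fun i => dstar n i + t) (by fun_prop) ?_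
    exact fun s hs i => dstar_add_pos hs i
  have hlim : Tendsto f atTop (𝓝 0) := by
    simpa using (scaleMat_limit hA (dstar n)).sub (shiftAngle_lim A)
  have hconst : ∀ s ∈ Set.Ioi (0:ℝ), f s = f t := fun s hs =>
    const_of_angle isPreconnected_Ioi hc (a := 0) (fun x hx => by
      simp only [hf]
      rw [Real.Angle.coe_sub, scaleMat_angle hA (fun i => dstar_add_pos hx i),
        shiftAngle_angle hA hdet (le_of_lt hx), sub_self]) hs ht
  have hlim2 : Tendsto f atTop (𝓝 (f t)) := by
    refine tendsto_const_nhds.congr' ?_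
    filter_upwards [eventually_gt_atTop 0] with s hs
    exact (hconst s hs).symm
  have := tendsto_nhds_unique hlim2 hlim
  simp only [hf] at this
  linarith

/-- diagonal `(p⁻²,1,…,1)` -/
noncomputable def dp (n : ℕ) (p : ℝ) : Fin (n+1) → ℝ := fun i => if i = 0 then (p⁻¹)^2 else 1

lemma scaleMat_dp {n : ℕ} (A : Matrix (Fin (n+1)) (Fin (n+1)) ℝ) {p : ℝ} (hp : 0 < p) :
    scaleMat A (dp n p) = Inp n p * A * Inp n p := by
  have : (fun i => 1 / √(dp n p i)) = fun i : Fin (n+1) => if i = 0 then p else 1 := by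
    ext i
    unfold dp
    split_ifs
    · rw [Real.sqrt_sq (by positivity)]; simp
    · simp
  rw [scaleMat, this, Inp]

/-- For every `A ∈ Sym(ℝ^{n+1}) \ S`,
`Θ̃(A) = lim_{p→∞} ∑_j arctan(λ_j(I_n^p A I_n^p))`, i.e. `Θ̃(A)` is the limit as `p → ∞`
of the lifted Lagrangian angle of the real symmetric matrix `I_n^p A I_n^p`. -/
theorem spaceTimeAngle_limit (n : ℕ) (A : Matrix (Fin (n+1)) (Fin (n+1)) ℝ)
    (hA : A.IsSymm) (hdet : (cmat A).det ≠ 0) :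
    Filter.Tendsto (fun p : ℝ => liftedAngle (Inp n p * A * Inp n p))
      Filter.atTop (nhds (spaceTimeAngle A)) := by
  classical
  have hsp : spaceTimeAngle A = shiftAngle A 0 := by
    rw [spaceTimeAngle, if_neg hdet, shiftAngle]
    simp
  rw [hsp]
  set d0 : ℂ := (pathMat (dstar n) A).det with hd0
  have hd0ne : d0 ≠ 0 := by rw [hd0, ← cmat_eq]; exact hdet
  set L : (Fin (n+1) → ℝ) → ℂ := fun d => (pathMat d A).det / d0 with hL
  have hLc : Continuous L :=
    (continuous_det_pathMat.comp (f := fun d : Fin (n+1) → ℝ => (d, A)) (by fun_prop)).div_const _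
  have hL1 : L (dstar n) = 1 := div_self hd0ne
  obtain ⟨δ, hδ, hball⟩ := Metric.mem_nhds_iff.1 (hLc.continuousAt.preimage_mem_nhds
    (Complex.isOpen_slitPlane.mem_nhds (by rw [hL1]; simp) : Complex.slitPlane ∈ nhds (L (dstar n))))
  set S : Set (Fin (n+1) → ℝ) := {d | ∀ i, 0 < d i} ∩ Metric.ball (dstar n) δ with hS
  have hconv : Convex ℝ S := by
    refine Convex.inter ?_ (convex_ball _ _)
    have : {d : Fin (n+1) → ℝ | ∀ i, 0 < d i} = Set.pi Set.univ fun _ => Set.Ioi 0 := by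
      ext d; simp
    rw [this]
    exact convex_pi fun i _ => convex_Ioi 0
  have hargL : ∀ d ∈ Metric.ball (dstar n) δ, ContinuousAt (fun d => Complex.arg (L d)) d :=
    fun d hd => (Complex.continuousAt_arg (hball hd)).comp hLc.continuousAt
  have hcont : ContinuousOn (fun d => liftedAngle (scaleMat A d) - Complex.arg (L d)) S := by
    refine ContinuousOn.sub ((scaleMat_cont hA).mono Set.inter_subset_left) ?_
    exact fun d hd => (hargL d hd.2).continuousWithinAt
  have hconst : ∀ x ∈ S, ∀ y ∈ S, liftedAngle (scaleMat A x) - Complex.arg (L x) =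
      liftedAngle (scaleMat A y) - Complex.arg (L y) := fun x hx y hy =>
    const_of_angle hconv.isPreconnected hcont (a := (Complex.arg d0 : Real.Angle)) (fun d hd => by
      rw [Real.Angle.coe_sub, scaleMat_angle hA hd.1,
        arg_div_angle (pathMat_det_ne hA hd.1) hd0ne, sub_sub_cancel]) hx hy
  have hargt : Tendsto (fun d => Complex.arg (L d)) (nhds (dstar n)) (nhds 0) := by
    have := (hargL _ (Metric.mem_ball_self hδ)).tendsto
    simpa [hL1] using this
  -- the path dp
  have hdp : Tendsto (dp n) atTop (nhds (dstar n)) := by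
    refine tendsto_pi_nhds.2 fun i => ?_
    unfold dp dstar
    by_cases hi : i = 0
    · simp only [hi, if_true]
      simpa using (tendsto_inv_atTop_zero (𝕜 := ℝ)).pow 2
    · simp only [hi, if_false]
      exact tendsto_const_nhds
  have hdpS : ∀ᶠ p in atTop, dp n p ∈ S := by
    filter_upwards [hdp.eventually_mem (Metric.ball_mem_nhds _ hδ), eventually_gt_atTop 0]
      with p hp hp0
    refine ⟨fun i => ?_, hp⟩
    unfold dp; split_ifs <;> positivity
  -- the path dstar + t
  have hdt : Tendsto (fun t : ℝ => fun i => dstar n i + t) (nhdsWithin 0 (Set.Ioi 0))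
      (nhds (dstar n)) := by
    refine tendsto_nhdsWithin_of_tendsto_nhds ?_
    have : Continuous (fun t : ℝ => fun i => dstar n i + t) := by fun_prop
    simpa using this.tendsto 0
  have hdtS : ∀ᶠ t in nhdsWithin (0:ℝ) (Set.Ioi 0), (fun i => dstar n i + t) ∈ S := by
    filter_upwards [hdt.eventually_mem (Metric.ball_mem_nhds _ hδ), self_mem_nhdsWithin]
      with t ht ht0
    exact ⟨fun i => dstar_add_pos ht0 i, ht⟩
  obtain ⟨p0, hp0⟩ := hdpS.exists
  set c := liftedAngle (scaleMat A (dp n p0)) - Complex.arg (L (dp n p0)) with hc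
  have hlim1 : Tendsto (fun t : ℝ => shiftAngle A t - Complex.arg (L (fun i => dstar n i + t)))
      (nhdsWithin 0 (Set.Ioi 0)) (nhds (shiftAngle A 0 - 0)) :=
    (tendsto_nhdsWithin_of_tendsto_nhds (shiftAngle_cont hA hdet le_rfl)).sub (hargt.comp hdt)
  have hlim2 : Tendsto (fun t : ℝ => shiftAngle A t - Complex.arg (L (fun i => dstar n i + t)))
      (nhdsWithin 0 (Set.Ioi 0)) (nhds c) := by
    refine tendsto_const_nhds.congr' ?_
    filter_upwards [hdtS, self_mem_nhdsWithin] with t ht ht0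
    rw [← lifted_eq_shift hA hdet ht0]
    exact hconst _ hp0 _ ht
  have hcc : c = shiftAngle A 0 := by
    have := tendsto_nhds_unique hlim2 hlim1
    simpa using this
  rw [← hcc]
  have hfin : Tendsto (fun p => c + Complex.arg (L (dp n p))) atTop (nhds (c + 0)) :=
    tendsto_const_nhds.add (hargt.comp hdp)
  rw [add_zero] at hfin
  refine hfin.congr' ?_
  filter_upwards [hdpS, eventually_gt_atTop 0] with p hp hpos
  rw [← scaleMat_dp A hpos]
  have := hconst _ hp _ hp0
  linarith
end

section
/- The function Θ̃ is upper semicontinuous on Sym(ℝ^{n+1}), and it is the smallest upper semicontinuous extension of its restriction to Sym(ℝ^{n+1}) \ S: if g : Sym(ℝ^{n+1}) → ℝ is upper semicontinuous and g(A) = Θ̃(A) for every A ∈ Sym(ℝ^{n+1}) \ S, then g(A) ≥ Θ̃(A) for every A ∈ Sym(ℝ^{n+1}). -/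
open Real Filter Matrix

/-! ### Auxiliary lemmas -/

/-- The argument, with the value `π/2` at the origin. -/
noncomputable def argStar (z : ℂ) : ℝ := if z = 0 then π / 2 else Complex.arg z

theorem cmat_quadratic {n : ℕ} (A : Matrix (Fin (n+1)) (Fin (n+1)) ℝ) (hA : A.IsSymm)
    (z : ℂ) (v : Fin (n+1) → ℂ) (h : (cmat A).mulVec v = z • v) :
    z.re * ∑ i, Complex.normSq (v i) = ∑ i : Fin n, Complex.normSq (v i.succ) := by
  have h1 : star v ⬝ᵥ ((cmat A).mulVec v) = z * ∑ i, (Complex.normSq (v i) : ℂ) := by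
    rw [h, dotProduct_smul, smul_eq_mul]
    congr 1
    simp only [dotProduct, Pi.star_apply]
    refine Finset.sum_congr rfl fun i _ => ?_
    rw [Complex.normSq_eq_conj_mul_self]; rfl
  have hq : (star v ⬝ᵥ ((A.map (fun a => (a : ℂ))).mulVec v)).im = 0 := by
    rw [← Complex.conj_eq_iff_im]
    have : (starRingEnd ℂ) (star v ⬝ᵥ ((A.map (fun a => (a : ℂ))).mulVec v))
        = star (star v ⬝ᵥ ((A.map (fun a => (a : ℂ))).mulVec v)) := rfl
    rw [this]
    simp only [dotProduct, mulVec, Matrix.map_apply, Pi.star_apply, star_sum, star_mul',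
      star_star, Finset.mul_sum]
    rw [Finset.sum_comm]
    refine Finset.sum_congr rfl fun i _ => Finset.sum_congr rfl fun j _ => ?_
    rw [hA.apply j i]
    have : star ((A j i : ℝ) : ℂ) = (A j i : ℂ) := Complex.conj_ofReal _
    rw [hA.apply i j] at *
    rw [this]; ring
  have h2 : star v ⬝ᵥ ((cmat A).mulVec v) = ((∑ i : Fin n, Complex.normSq (v i.succ) : ℝ) : ℂ)
      + Complex.I * (star v ⬝ᵥ ((A.map (fun a => (a : ℂ))).mulVec v)) := by
    unfold cmat Inmat
    rw [add_mulVec, dotProduct_add, smul_mulVec, dotProduct_smul, smul_eq_mul]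
    congr 1
    simp only [dotProduct, mulVec_diagonal, Fin.sum_univ_succ, Pi.star_apply]
    simp [Fin.succ_ne_zero, Complex.normSq_eq_conj_mul_self]
  rw [h1] at h2
  have h3 := congrArg Complex.re h2
  rw [← Complex.ofReal_sum, Complex.re_mul_ofReal] at h3
  rw [h3]
  simp [hq]

theorem exists_eigvec {m : ℕ} (M : Matrix (Fin m) (Fin m) ℂ) (z : ℂ)
    (h : z ∈ M.charpoly.roots) : ∃ v, v ≠ 0 ∧ M.mulVec v = z • v := by
  have h0 : M.charpoly.eval z = 0 := Polynomial.isRoot_of_mem_roots h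
  rw [Matrix.eval_charpoly] at h0
  obtain ⟨v, hv, h1⟩ := Matrix.exists_mulVec_eq_zero_iff.mpr h0
  refine ⟨v, hv, ?_⟩
  rw [sub_mulVec, sub_eq_zero] at h1
  rw [← h1]
  ext i
  simp [Matrix.scalar_apply, mulVec_diagonal]

theorem re_nonneg_of_root {n : ℕ} (A : Matrix (Fin (n+1)) (Fin (n+1)) ℝ) (hA : A.IsSymm)
    (z : ℂ) (h : z ∈ (cmat A).charpoly.roots) : 0 ≤ z.re := by
  obtain ⟨v, hv, h1⟩ := exists_eigvec _ z h
  have h2 := cmat_quadratic A hA z v h1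
  have h3 : 0 < ∑ i, Complex.normSq (v i) := by
    obtain ⟨i, hi⟩ := Function.ne_iff.mp hv
    exact Finset.sum_pos' (fun i _ => Complex.normSq_nonneg _)
      ⟨i, Finset.mem_univ _, Complex.normSq_pos.mpr hi⟩
  have h4 : 0 ≤ ∑ i : Fin n, Complex.normSq (v i.succ) :=
    Finset.sum_nonneg fun i _ => Complex.normSq_nonneg _
  rw [← h2] at h4
  exact nonneg_of_mul_nonneg_left h4 h3

theorem ker_cmat {n : ℕ} (A : Matrix (Fin (n+1)) (Fin (n+1)) ℝ) (hA : A.IsSymm)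
    (v : Fin (n+1) → ℂ) (h : (cmat A).mulVec v = 0) (i : Fin n) : v i.succ = 0 := by
  have h2 := cmat_quadratic A hA 0 v (by simpa using h)
  simp only [Complex.zero_re, zero_mul] at h2
  have := (Finset.sum_eq_zero_iff_of_nonneg (fun i _ => Complex.normSq_nonneg _)).mp h2.symm i
    (Finset.mem_univ _)
  exact Complex.normSq_eq_zero.mp this

theorem col_zero {n : ℕ} (A : Matrix (Fin (n+1)) (Fin (n+1)) ℝ) (hA : A.IsSymm)
    (h : (cmat A).det = 0) (i : Fin (n+1)) : A i 0 = 0 := by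
  obtain ⟨v, hv, h1⟩ := Matrix.exists_mulVec_eq_zero_iff.mpr h
  have h2 := ker_cmat A hA v h1
  have h3 : v 0 ≠ 0 := by
    intro h0
    apply hv
    ext j
    refine Fin.cases h0 h2 j
  have h4 := congrFun h1 i
  simp only [mulVec, dotProduct, Fin.sum_univ_succ, h2, mul_zero, Finset.sum_const_zero,
    add_zero, Pi.zero_apply, mul_eq_zero, h3, or_false] at h4
  have h5 := congrArg Complex.im h4
  unfold cmat Inmat at h5
  by_cases hi : i = 0 <;> simpa [Matrix.diagonal_apply, hi] using h5

theorem charpoly_split {m : ℕ} (M : Matrix (Fin (m+1)) (Fin (m+1)) ℂ)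
    (h : ∀ i : Fin m, M i.succ 0 = 0) :
    M.charpoly = (Polynomial.X - Polynomial.C (M 0 0)) *
      (M.submatrix Fin.succ Fin.succ).charpoly := by
  unfold Matrix.charpoly
  rw [Matrix.det_succ_column_zero, Fin.sum_univ_succ]
  have h1 : ∀ i : Fin m, M.charmatrix i.succ 0 = 0 := by
    intro i
    rw [charmatrix_apply_ne _ _ _ (Fin.succ_ne_zero i), h i]; simp
  simp only [h1, mul_zero, zero_mul, Finset.sum_const_zero, add_zero]
  simp only [Fin.val_zero, pow_zero, one_mul, charmatrix_apply_eq]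
  congr 2
  ext i j : 2
  simp [charmatrix_apply, Matrix.diagonal_apply]

theorem sub_roots_ne_zero {n : ℕ} (A : Matrix (Fin (n+1)) (Fin (n+1)) ℝ) (hA : A.IsSymm)
    (h : (cmat A).det = 0) (z : ℂ)
    (hz : z ∈ ((cmat A).submatrix Fin.succ Fin.succ).charpoly.roots) : z ≠ 0 := by
  rintro rfl
  obtain ⟨w, hw, h1⟩ := exists_eigvec _ _ hz
  rw [zero_smul] at h1
  have hc := col_zero A hA h
  have h2 : (cmat A).mulVec (Fin.cons 0 w) = 0 := by
    ext i
    refine Fin.cases ?_ (fun i => ?_) i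
    · have : ∀ j : Fin n, cmat A 0 j.succ = 0 := by
        intro j
        have : A 0 j.succ = 0 := by rw [← hA.apply]; exact hc _
        simp [cmat, Inmat, this, (Fin.succ_ne_zero j).symm]
      simp [mulVec, dotProduct, Fin.sum_univ_succ, this]
    · have := congrFun h1 i
      simpa [mulVec, dotProduct, Fin.sum_univ_succ] using this
  apply hw
  ext i
  simpa using ker_cmat A hA _ h2 i

theorem charpoly_ne_zero' {m : ℕ} (M : Matrix (Fin m) (Fin m) ℂ) : M.charpoly ≠ 0 :=
  (Matrix.charpoly_monic M).ne_zero

/-- On the singular set perturbed by `a` in the corner. -/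
theorem roots_perturb {n : ℕ} (A : Matrix (Fin (n+1)) (Fin (n+1)) ℝ) (hA : A.IsSymm)
    (h : (cmat A).det = 0) (a : ℝ) :
    (cmat (A + Matrix.single 0 0 a)).charpoly.roots = (Complex.I * a) ::ₘ
      ((cmat A).submatrix Fin.succ Fin.succ).charpoly.roots := by
  have hc := col_zero A hA h
  have e1 : (cmat (A + Matrix.single 0 0 a)) 0 0 = Complex.I * a := by
    simp [cmat, Inmat, hc 0]
  have e2 : (cmat (A + Matrix.single 0 0 a)).submatrix Fin.succ Fin.succ =
      (cmat A).submatrix Fin.succ Fin.succ := by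
    ext i j
    simp [cmat, Inmat, (Fin.succ_ne_zero _).symm]
  rw [charpoly_split, e1, e2, Polynomial.roots_mul, Polynomial.roots_X_sub_C]
  · rfl
  · exact mul_ne_zero (Polynomial.X_sub_C_ne_zero _) (charpoly_ne_zero' _)
  · intro i
    simp [cmat, Inmat, hc, (Fin.succ_ne_zero _), (Fin.succ_ne_zero _).symm]

theorem roots_singular {n : ℕ} (A : Matrix (Fin (n+1)) (Fin (n+1)) ℝ) (hA : A.IsSymm)
    (h : (cmat A).det = 0) :
    (cmat A).charpoly.roots = 0 ::ₘ
      ((cmat A).submatrix Fin.succ Fin.succ).charpoly.roots := by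
  simpa using roots_perturb A hA h 0

theorem det_eq_zero_iff_root {m : ℕ} (M : Matrix (Fin m) (Fin m) ℂ) :
    M.det = 0 ↔ (0 : ℂ) ∈ M.charpoly.roots := by
  rw [Polynomial.mem_roots (charpoly_ne_zero' _), Polynomial.IsRoot.def, Matrix.eval_charpoly]
  simp [Matrix.det_neg]

theorem spaceTimeAngle_eq {n : ℕ} (A : Matrix (Fin (n+1)) (Fin (n+1)) ℝ) (hA : A.IsSymm) :
    spaceTimeAngle A = ((cmat A).charpoly.roots.map argStar).sum := by
  unfold spaceTimeAngle
  split_ifs with h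
  · have hne := sub_roots_ne_zero A hA h
    rw [roots_singular A hA h, Multiset.filter_cons_of_neg _ (by simp),
      Multiset.filter_eq_self.mpr hne, Multiset.map_cons, Multiset.sum_cons]
    congr 1
    · simp [argStar]
    · congr 1
      exact Multiset.map_congr rfl fun z hz => by simp [argStar, hne z hz]
  · congr 1
    refine Multiset.map_congr rfl fun z hz => ?_
    have : z ≠ 0 := by
      rintro rfl
      exact h ((det_eq_zero_iff_root _).mpr hz)
    simp [argStar, this]

theorem argStar_usc (z : ℂ) (hz : 0 ≤ z.re) (δ : ℝ) (hδ : 0 < δ) :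
    ∀ᶠ w in nhds z, 0 ≤ w.re → argStar w < argStar z + δ := by
  by_cases h : z = 0
  · subst h
    refine Filter.Eventually.of_forall fun w hw => ?_
    have : argStar w ≤ π / 2 := by
      unfold argStar
      split_ifs
      · exact le_rfl
      · exact (abs_le.mp (Complex.abs_arg_le_pi_div_two_iff.mpr hw)).2
    have h0 : argStar 0 = π / 2 := by simp [argStar]
    linarith
  · have hs : z ∈ Complex.slitPlane := by
      rw [Complex.mem_slitPlane_iff]
      by_contra hcon
      push Not at hcon
      exact h (Complex.ext (le_antisymm hcon.1 hz) hcon.2)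
    have hc := (Complex.continuousAt_arg hs).eventually_lt_const
      (show Complex.arg z < Complex.arg z + δ by linarith)
    filter_upwards [hc, isOpen_ne.mem_nhds h] with w hw hw0 _
    have hw0' : w ≠ 0 := hw0
    simpa [argStar, hw0', h] using hw

theorem exists_rootVec {m : ℕ} (M : Matrix (Fin m) (Fin m) ℂ) :
    ∃ r : Fin m → ℂ, M.charpoly.roots = Finset.univ.val.map r := by
  have hcard : M.charpoly.roots.card = m := by
    rw [← (IsAlgClosed.splits M.charpoly).natDegree_eq_card_roots, Matrix.charpoly_natDegree_eq_dim,
      Fintype.card_fin]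
  generalize M.charpoly.roots = s at hcard
  induction s using Quotient.inductionOn with
  | h l =>
    have hl : l.length = m := by simpa using hcard
    subst hl
    refine ⟨l.get, ?_⟩
    simp [Fin.univ_val_map]

theorem charpoly_eval_rootVec {m : ℕ} (M : Matrix (Fin m) (Fin m) ℂ) (r : Fin m → ℂ)
    (h : M.charpoly.roots = Finset.univ.val.map r) (z : ℂ) :
    M.charpoly.eval z = ∏ i, (z - r i) := by
  have := (IsAlgClosed.splits M.charpoly).eq_prod_roots_of_monic (Matrix.charpoly_monic M)
  rw [this, h, Polynomial.eval_multiset_prod]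
  simp only [Finset.prod, Multiset.map_map, Function.comp_def, Polynomial.eval_sub, Polynomial.eval_X, Polynomial.eval_C]

theorem roots_of_eval {m : ℕ} (M : Matrix (Fin m) (Fin m) ℂ) (r : Fin m → ℂ)
    (h : ∀ z, M.charpoly.eval z = ∏ i, (z - r i)) :
    M.charpoly.roots = Finset.univ.val.map r := by
  have : M.charpoly = ((Finset.univ.val.map r).map fun a => Polynomial.X - Polynomial.C a).prod := by
    apply Polynomial.funext
    intro z
    rw [h, Polynomial.eval_multiset_prod]
    simp only [Finset.prod, Multiset.map_map, Function.comp_def, Polynomial.eval_sub,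
      Polynomial.eval_X, Polynomial.eval_C]
  rw [this, Polynomial.roots_multiset_prod_X_sub_C]

theorem continuous_cmat {n : ℕ} :
    Continuous (cmat (n := n)) := by
  unfold cmat
  have h1 : Continuous fun A : Matrix (Fin (n+1)) (Fin (n+1)) ℝ => A.map (fun a => (a : ℂ)) :=
    continuous_id.matrix_map Complex.continuous_ofReal
  have h2 : Continuous fun A : Matrix (Fin (n+1)) (Fin (n+1)) ℝ =>
      Complex.I • A.map (fun a => (a : ℂ)) := h1.const_smul Complex.I
  exact continuous_const.add h2

attribute [local instance] Matrix.linftyOpNormedRing Matrix.linftyOpNormedAlgebra in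
theorem root_bound {n : ℕ} (A : Matrix (Fin (n+1)) (Fin (n+1)) ℝ) :
    ∃ R : ℝ, ∀ᶠ B in nhds A, ∀ z ∈ (cmat (n := n) B).charpoly.roots, ‖z‖ ≤ R := by
  have hc : Continuous fun B => ‖cmat (n := n) B‖ := continuous_cmat.norm
  refine ⟨‖cmat A‖ + 1, ?_⟩
  filter_upwards [hc.continuousAt.eventually_lt_const (show ‖cmat A‖ < ‖cmat A‖ + 1 by linarith)]
    with B hB z hz
  have : z ∈ spectrum ℂ (cmat B) := by
    rw [Matrix.mem_spectrum_iff_isRoot_charpoly]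
    exact Polynomial.isRoot_of_mem_roots hz
  have := spectrum.norm_le_norm_of_mem this
  linarith

theorem usc_part (n : ℕ) : UpperSemicontinuousOn (spaceTimeAngle (n := n))
      {A : Matrix (Fin (n+1)) (Fin (n+1)) ℝ | A.IsSymm} := by
  intro A hA y hy
  have hA' : A.IsSymm := hA
  by_contra hcon
  have hne : (nhdsWithin A {A | A.IsSymm} ⊓
      Filter.principal {B | ¬ spaceTimeAngle B < y}).NeBot :=
    Filter.frequently_mem_iff_neBot.mp (Filter.not_eventually.mp hcon)
  obtain ⟨U, hU0⟩ := Ultrafilter.exists_le (nhdsWithin A {A | A.IsSymm} ⊓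
      Filter.principal {B | ¬ spaceTimeAngle B < y})
  have hUle := hU0.trans inf_le_left
  have hU := Filter.le_principal_iff.mp (hU0.trans inf_le_right)
  have hUA : (U : Filter _) ≤ nhds A := hUle.trans nhdsWithin_le_nhds
  have hsymm : ∀ᶠ B in (U : Filter (Matrix (Fin (n+1)) (Fin (n+1)) ℝ)), Matrix.IsSymm B := hUle self_mem_nhdsWithin
  choose r hr using fun B : Matrix (Fin (n+1)) (Fin (n+1)) ℝ => exists_rootVec (cmat B)
  have hmem : ∀ B i, r B i ∈ (cmat B).charpoly.roots := by
    intro B i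
    rw [hr]
    exact Multiset.mem_map_of_mem _ (Finset.mem_univ_val _)
  obtain ⟨R, hR⟩ := root_bound A
  have hcpt : IsCompact (Set.univ.pi fun _ : Fin (n+1) => Metric.closedBall (0 : ℂ) R) :=
    isCompact_univ_pi fun _ => isCompact_closedBall _ _
  have hin : ∀ᶠ B in (U : Filter (Matrix (Fin (n+1)) (Fin (n+1)) ℝ)),
      r B ∈ (Set.univ.pi fun _ : Fin (n+1) => Metric.closedBall (0 : ℂ) R) := by
    filter_upwards [hUA hR] with B hB i _
    simpa using hB _ (hmem B i)
  obtain ⟨r0, -, hr0⟩ := hcpt.ultrafilter_le_nhds (U.map r) (Filter.le_principal_iff.mpr hin)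
  have hlim : Tendsto r U (nhds r0) := hr0
  have hlim' := tendsto_pi_nhds.mp hlim
  have hev : ∀ z, (cmat A).charpoly.eval z = ∏ i, (z - r0 i) := by
    intro z
    have t1 : Tendsto (fun B => (cmat (n := n) B).charpoly.eval z) U
        (nhds ((cmat A).charpoly.eval z)) := by
      have : Continuous (fun B => (cmat (n := n) B).charpoly.eval z) := by
        simp only [Matrix.eval_charpoly]
        exact (continuous_const.sub continuous_cmat).matrix_det
      exact (this.tendsto A).mono_left hUA
    have t2 : Tendsto (fun B => (cmat (n := n) B).charpoly.eval z) U
        (nhds (∏ i, (z - r0 i))) := by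
      simp only [fun B => charpoly_eval_rootVec (cmat B) (r B) (hr B)]
      exact tendsto_finsetProd _ fun i _ => tendsto_const_nhds.sub (hlim' i)
    exact tendsto_nhds_unique t1 t2
  have hroots := roots_of_eval _ _ hev
  have hAsum : spaceTimeAngle A = ∑ i, argStar (r0 i) := by
    rw [spaceTimeAngle_eq A hA', hroots, Multiset.map_map]; rfl
  set δ := (y - spaceTimeAngle A) / (n + 1) with hδ
  have hn : (0 : ℝ) < n + 1 := by positivity
  have hδpos : 0 < δ := div_pos (by linarith) hn
  have hall : ∀ᶠ B in (U : Filter (Matrix (Fin (n+1)) (Fin (n+1)) ℝ)), ∀ i, 0 ≤ (r B i).re →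
      argStar (r B i) < argStar (r0 i) + δ := by
    rw [Filter.eventually_all]
    intro i
    refine (hlim' i).eventually (argStar_usc (r0 i) ?_ δ hδpos)
    apply re_nonneg_of_root A hA'
    rw [hroots]
    exact Multiset.mem_map_of_mem _ (Finset.mem_univ_val _)
  have hU' : ∀ᶠ B in (U : Filter (Matrix (Fin (n+1)) (Fin (n+1)) ℝ)), ¬ spaceTimeAngle B < y := hU
  obtain ⟨B, hB1, hB2, hB3⟩ := (hall.and (hsymm.and hU')).exists
  apply hB3
  have hBsum : spaceTimeAngle B = ∑ i, argStar (r B i) := by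
    rw [spaceTimeAngle_eq B hB2, hr B, Multiset.map_map]; rfl
  have : ∑ i, argStar (r B i) < ∑ i : Fin (n+1), (argStar (r0 i) + δ) :=
    Finset.sum_lt_sum_of_nonempty Finset.univ_nonempty fun i _ =>
      hB1 i (re_nonneg_of_root B hB2 _ (hmem B i))
  rw [Finset.sum_add_distrib, ← hAsum, Finset.sum_const, Finset.card_univ, Fintype.card_fin,
    nsmul_eq_mul, hδ] at this
  rw [hBsum]
  push_cast at this
  rw [mul_div_cancel₀ _ hn.ne'] at this
  linarith

theorem minimal_part (n : ℕ) (g : Matrix (Fin (n+1)) (Fin (n+1)) ℝ → ℝ)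
    (hg : UpperSemicontinuousOn g {A : Matrix (Fin (n+1)) (Fin (n+1)) ℝ | A.IsSymm})
    (hgA : ∀ A : Matrix (Fin (n+1)) (Fin (n+1)) ℝ, A.IsSymm → (cmat A).det ≠ 0 →
        g A = spaceTimeAngle A)
    (A : Matrix (Fin (n+1)) (Fin (n+1)) ℝ) (hA : A.IsSymm) : spaceTimeAngle A ≤ g A := by
  by_cases h : (cmat A).det = 0
  swap
  · exact (hgA A hA h).ge
  by_contra! hlt
  have hev := hg A hA _ hlt
  have hsymm : ∀ a : ℝ, (A + Matrix.single 0 0 a).IsSymm := by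
    intro a
    refine hA.add ?_
    simp [Matrix.IsSymm, Matrix.transpose_single]
  have hcont : Continuous fun a : ℝ => A + Matrix.single 0 0 a := by
    refine continuous_const.add ?_
    refine continuous_matrix fun i j => ?_
    simp only [Matrix.single_apply]
    split_ifs
    · exact continuous_id
    · exact continuous_const
  have htend : Tendsto (fun a : ℝ => A + Matrix.single 0 0 a) (nhdsWithin 0 (Set.Ioi 0))
      (nhdsWithin A {A | A.IsSymm}) := by
    refine tendsto_nhdsWithin_iff.mpr ⟨?_, Filter.Eventually.of_forall hsymm⟩
    have := hcont.tendsto 0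
    simp only [Matrix.single_zero, add_zero] at this
    exact this.mono_left nhdsWithin_le_nhds
  obtain ⟨a, ha1, ha2⟩ := ((htend.eventually hev).and self_mem_nhdsWithin).exists
  have ha : 0 < a := ha2
  have hne : Complex.I * (a : ℂ) ≠ 0 :=
    mul_ne_zero Complex.I_ne_zero (Complex.ofReal_ne_zero.mpr ha.ne')
  have hdet : (cmat (A + Matrix.single 0 0 a)).det ≠ 0 := by
    intro hd
    rw [det_eq_zero_iff_root, roots_perturb A hA h, Multiset.mem_cons] at hd
    rcases hd with hd | hd
    · exact hne hd.symm
    · exact sub_roots_ne_zero A hA h 0 hd rfl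
  rw [hgA _ (hsymm a) hdet, spaceTimeAngle_eq _ (hsymm a), spaceTimeAngle_eq _ hA,
    roots_perturb A hA h, roots_singular A hA h] at ha1
  simp only [Multiset.map_cons, Multiset.sum_cons] at ha1
  have e : argStar (Complex.I * a) = argStar 0 := by
    have : Complex.arg (Complex.I * a) = π / 2 := by
      rw [mul_comm, Complex.arg_real_mul _ ha, Complex.arg_I]
    simp only [argStar, hne, if_false, this, if_true]
  rw [e] at ha1
  exact lt_irrefl _ ha1

/-- `Θ̃` is upper semicontinuous on `Sym(ℝ^{n+1})`, and it is the smallest upper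
semicontinuous function on `Sym(ℝ^{n+1})` extending its restriction to
`Sym(ℝ^{n+1}) \ S`. -/
theorem spaceTimeAngle_usc_minimal (n : ℕ) :
    UpperSemicontinuousOn (spaceTimeAngle (n := n))
      {A : Matrix (Fin (n+1)) (Fin (n+1)) ℝ | A.IsSymm} ∧
    ∀ g : Matrix (Fin (n+1)) (Fin (n+1)) ℝ → ℝ,
      UpperSemicontinuousOn g {A : Matrix (Fin (n+1)) (Fin (n+1)) ℝ | A.IsSymm} →
      (∀ A : Matrix (Fin (n+1)) (Fin (n+1)) ℝ, A.IsSymm → (cmat A).det ≠ 0 →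
        g A = spaceTimeAngle A) →
      ∀ A : Matrix (Fin (n+1)) (Fin (n+1)) ℝ, A.IsSymm → spaceTimeAngle A ≤ g A := by
  exact ⟨usc_part n, minimal_part n⟩
end

section
/- Let D ⊂ ℝⁿ be a bounded strictly convex domain, a ∈ [(n−1)π/2, nπ/2), v ∈ C⁰(D̄), and f ∈ C⁰(∂D). Define the envelope P(v; f) := sup{ w ∈ F_a(D) : w ≤ v on D and limsup_{ξ→x} w(ξ) ≤ f(x) for all x ∈ ∂D }, and assume the candidate family is nonempty. Then P(v; f) equals its upper semicontinuous regularization, P(v; f) ∈ F_a(D), and P(v; f) is convex and continuous on D. Moreover P(v; f) ≤ v on D and limsup_{ξ→x} P(v; f)(ξ) ≤ f(x) for all x ∈ ∂D, i.e. P(v; f) is itself a candidate in its own defining family. -/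
open Real Filter Matrix

theorem aux_eig_ge {n : ℕ} {A : Matrix (Fin n) (Fin n) ℝ} (h : A.IsHermitian) (c : ℝ)
    (hc : ∀ e : Fin n → ℝ, c * (e ⬝ᵥ e) ≤ e ⬝ᵥ (A *ᵥ e)) (j : Fin n) :
    c ≤ h.eigenvalues j := by
  have h1 := hc (h.eigenvectorBasis j)
  have h2 : (h.eigenvectorBasis j : Fin n → ℝ) ⬝ᵥ (h.eigenvectorBasis j : Fin n → ℝ) = 1 := by
    have h3 := h.eigenvectorBasis.orthonormal.1 j
    have h4 : inner ℝ (h.eigenvectorBasis j) (h.eigenvectorBasis j) = 1 := by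
      rw [real_inner_self_eq_norm_sq, h3]; norm_num
    rw [EuclideanSpace.inner_eq_star_dotProduct] at h4
    simpa using h4
  have h5 := h.mulVec_eigenvectorBasis j
  rw [h5, dotProduct_smul, h2] at h1
  simpa using h1

theorem aux_Fc_posSemidef {n : ℕ} (hn : 0 < n) {a : ℝ} (ha : ((n : ℝ) - 1) * π / 2 ≤ a)
    {A : Matrix (Fin n) (Fin n) ℝ} (hA : A ∈ Fc n a) : ∀ e : Fin n → ℝ, 0 ≤ e ⬝ᵥ (A *ᵥ e) := by
  obtain ⟨hs, hl⟩ := hA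
  have hH : A.IsHermitian := by
    rw [Matrix.IsHermitian, Matrix.conjTranspose_eq_transpose_of_trivial]; exact hs
  have hp : A.PosSemidef := by
    rw [hH.posSemidef_iff_eigenvalues_nonneg]
    intro j
    by_contra hj
    simp only [Pi.zero_apply, not_le] at hj
    rw [liftedAngle, dif_pos hH, ← Finset.add_sum_erase _ _ (Finset.mem_univ j)] at hl
    have h1 : Real.arctan (hH.eigenvalues j) < 0 := by
      simpa using Real.arctan_lt_zero.2 hj
    have h2 : ∑ i ∈ Finset.univ.erase j, Real.arctan (hH.eigenvalues i) ≤
        ((n : ℝ) - 1) * π / 2 := by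
      have := Finset.sum_le_card_nsmul (Finset.univ.erase j)
        (fun i => Real.arctan (hH.eigenvalues i)) (π / 2)
        (fun i _ => (Real.arctan_lt_pi_div_two _).le)
      rw [Finset.card_erase_of_mem (Finset.mem_univ j), Finset.card_univ, Fintype.card_fin,
        nsmul_eq_mul, Nat.cast_sub hn] at this
      simp only [Nat.cast_one] at this
      linarith
    linarith
  intro e
  simpa using hp.dotProduct_mulVec_nonneg e

theorem aux_dual_of_nonneg {n : ℕ} (hn : 0 < n) {a : ℝ} (ha : ((n : ℝ) - 1) * π / 2 ≤ a)
    {B : Matrix (Fin n) (Fin n) ℝ} (hB : B.IsSymm) (e : Fin n → ℝ) (he : e ≠ 0)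
    (heB : 0 ≤ e ⬝ᵥ (B *ᵥ e)) : B ∈ dualSub (Fc n a) := by
  refine ⟨hB, ?_⟩
  rintro ⟨-, hev⟩
  have ht : Tendsto (fun t : ℝ => -B - t • (1 : Matrix (Fin n) (Fin n) ℝ))
      (nhdsWithin 0 (Set.Ioi 0)) (nhds (-B)) := by
    have : Continuous (fun t : ℝ => -B - t • (1 : Matrix (Fin n) (Fin n) ℝ)) := by fun_prop
    have h2 := this.tendsto 0
    simp only [zero_smul, sub_zero] at h2
    exact h2.mono_left nhdsWithin_le_nhds
  obtain ⟨t, h1, h2⟩ := ((ht.eventually hev).and self_mem_nhdsWithin).exists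
  have hs : (-B - t • (1 : Matrix (Fin n) (Fin n) ℝ)).IsSymm := by
    simp [Matrix.IsSymm, hB.eq]
  have h3 := aux_Fc_posSemidef hn ha (h1 hs) e
  rw [Matrix.sub_mulVec, Matrix.neg_mulVec, Matrix.smul_mulVec, Matrix.one_mulVec,
    dotProduct_sub, dotProduct_neg, dotProduct_smul, smul_eq_mul] at h3
  have h4 : 0 < e ⬝ᵥ e := by
    rw [lt_iff_le_and_ne]
    refine ⟨Finset.sum_nonneg fun i _ => mul_self_nonneg _, fun h => he ?_⟩
    exact dotProduct_self_eq_zero.1 h.symm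
  have := mul_pos (Set.mem_Ioi.1 h2) h4
  linarith

theorem aux_exists_C {n : ℕ} (hn : 0 < n) {a : ℝ} (ha : ((n : ℝ) - 1) * π / 2 ≤ a)
    (ha' : a < (n : ℝ) * π / 2) : ∃ c : ℝ, a ≤ n * Real.arctan c := by
  have hn1 : (1 : ℝ) ≤ n := by exact_mod_cast hn
  have hn' : (0 : ℝ) < n := by linarith
  have ha0 : 0 ≤ a := by
    refine le_trans ?_ ha
    have := Real.pi_pos
    have : 0 ≤ (n : ℝ) - 1 := by linarith
    positivity
  refine ⟨Real.tan (a / n), ?_⟩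
  rw [Real.arctan_tan]
  · rw [mul_div_cancel₀ _ hn'.ne']
  · have : 0 ≤ a / n := by positivity
    have := Real.pi_pos
    linarith
  · rw [div_lt_iff₀ hn']; linarith

theorem aux_strict {n : ℕ} (hn : 0 < n) {a c : ℝ} (hc : a ≤ n * Real.arctan c)
    {B : Matrix (Fin n) (Fin n) ℝ} (hB : B ∈ dualSub (Fc n a)) :
    ∃ e : Fin n → ℝ, 0 < (c + 1) * (e ⬝ᵥ e) + e ⬝ᵥ (B *ᵥ e) := by
  by_contra hcon
  push Not at hcon
  apply hB.2
  refine ⟨by simp [Matrix.IsSymm, hB.1.eq], ?_⟩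
  have hn' : (0 : ℝ) < n := by exact_mod_cast hn
  have hnear : ∀ᶠ A : Matrix (Fin n) (Fin n) ℝ in nhds (-B),
      ∀ i j, |A i j + B i j| < 1 / n := by
    rw [eventually_all]; intro i
    rw [eventually_all]; intro j
    have hcont : Continuous (fun A : Matrix (Fin n) (Fin n) ℝ => |A i j + B i j|) := by
      fun_prop
    have := hcont.tendsto (-B)
    simp only [Matrix.neg_apply, neg_add_cancel, abs_zero] at this
    exact this.eventually (gt_mem_nhds (by positivity))
  filter_upwards [hnear] with A hA hs
  have hH : A.IsHermitian := by
    rw [Matrix.IsHermitian, Matrix.conjTranspose_eq_transpose_of_trivial]; exact hs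
  refine ⟨hs, ?_⟩
  rw [liftedAngle, dif_pos hH]
  have hkey : ∀ e : Fin n → ℝ, c * (e ⬝ᵥ e) ≤ e ⬝ᵥ (A *ᵥ e) := by
    intro e
    have h1 := hcon e
    have h2 : -(e ⬝ᵥ e) ≤ e ⬝ᵥ ((A + B) *ᵥ e) := by
      have h3 : |e ⬝ᵥ ((A + B) *ᵥ e)| ≤ ∑ i, ∑ j, (1 / n : ℝ) * (|e i| * |e j|) := by
        simp only [dotProduct, Matrix.mulVec, Finset.mul_sum]
        refine (Finset.abs_sum_le_sum_abs _ _).trans (Finset.sum_le_sum fun i _ => ?_)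
        refine (Finset.abs_sum_le_sum_abs _ _).trans (Finset.sum_le_sum fun j _ => ?_)
        rw [abs_mul, abs_mul, Matrix.add_apply]
        have := mul_le_mul_of_nonneg_right (hA i j).le
          (mul_nonneg (abs_nonneg (e i)) (abs_nonneg (e j)))
        linarith
      have h4 : ∑ i, ∑ j, (1 / n : ℝ) * (|e i| * |e j|) = (1 / n) * (∑ i, |e i|) ^ 2 := by
        rw [sq, Finset.sum_mul_sum, Finset.mul_sum]
        simp only [Finset.mul_sum]
      have h5 : (∑ i, |e i|) ^ 2 ≤ n * (e ⬝ᵥ e) := by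
        have := sq_sum_le_card_mul_sum_sq (s := Finset.univ) (f := fun i => |e i|)
        simp only [Finset.card_univ, Fintype.card_fin, sq_abs] at this
        simpa [dotProduct, sq] using this
      have h6 : (1 / n : ℝ) * (∑ i, |e i|) ^ 2 ≤ e ⬝ᵥ e := by
        rw [one_div, inv_mul_le_iff₀ hn']; exact h5
      have := (abs_le.1 (h3.trans (h4.le.trans h6))).1
      exact this
    rw [Matrix.add_mulVec, dotProduct_add] at h2
    linarith
  have h7 : ∑ _j : Fin n, Real.arctan c ≤ ∑ j, Real.arctan (hH.eigenvalues j) :=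
    Finset.sum_le_sum fun j _ => Real.arctan_strictMono.monotone (aux_eig_ge hH c hkey j)
  simp only [Finset.sum_const, Finset.card_univ, Fintype.card_fin, nsmul_eq_mul] at h7
  linarith

theorem aux_hess_quad {n : ℕ} (v : (Fin n → ℝ) → ℝ) (x e : Fin n → ℝ) :
    e ⬝ᵥ (hessianMatrix v x *ᵥ e) = fderiv ℝ (fderiv ℝ v) x e e := by
  have he : e = ∑ i, e i • (Pi.single i 1 : Fin n → ℝ) := by
    conv_lhs => rw [pi_eq_sum_univ e]
    refine Finset.sum_congr rfl fun i _ => ?_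
    congr 1; ext j; simp [Pi.single_apply, eq_comm]
  conv_rhs => rw [he]
  simp only [map_sum, map_smul, _root_.sum_apply, _root_.smul_apply,
    dotProduct, Matrix.mulVec, hessianMatrix, Matrix.of_apply, iteratedFDeriv_two_apply,
    Matrix.cons_val_zero, Matrix.cons_val_one, Finset.mul_sum, smul_eq_mul]
  rw [Finset.sum_comm]
  refine Finset.sum_congr rfl fun i _ => Finset.sum_congr rfl fun j _ => ?_
  ring

theorem aux_dual_invariant {n : ℕ} (hn : 0 < n) {a : ℝ} (ha : ((n : ℝ) - 1) * π / 2 ≤ a)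
    (v : (Fin n → ℝ) → ℝ) (hv : ContDiff ℝ 2 v) (e : Fin n → ℝ) (he : e ≠ 0)
    (hinv : ∀ x (t : ℝ), v (x + t • e) = v x) (x : Fin n → ℝ) :
    hessianMatrix v x ∈ dualSub (Fc n a) := by
  refine aux_dual_of_nonneg hn ha ?_ e he ?_
  · have := (hv.contDiffAt (x := x)).isSymmSndFDerivAt (by simp)
    ext i j
    simp only [hessianMatrix, Matrix.transpose_apply, Matrix.of_apply, iteratedFDeriv_two_apply]
    simpa using this _ _
  · rw [aux_hess_quad]
    have h1 : ∀ y, fderiv ℝ v y e = 0 := by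
      intro y
      have hd : HasFDerivAt v (fderiv ℝ v y) y :=
        (hv.differentiable (by norm_num) y).hasFDerivAt
      have h2 := hd.hasLineDerivAt e
      have h3 : HasLineDerivAt ℝ v 0 y e := by
        unfold HasLineDerivAt
        simp only [hinv]
        exact hasDerivAt_const _ _
      exact h2.unique h3
    have hdd : DifferentiableAt ℝ (fderiv ℝ v) x :=
      (hv.fderiv_right (m := 1) (by norm_num)).differentiable (by norm_num) x
    have h4 : fderiv ℝ (fun y => fderiv ℝ v y e) x e = fderiv ℝ (fderiv ℝ v) x e e := by
      rw [fderiv_clm_apply hdd (differentiableAt_const e)]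
      simp
    rw [← h4]
    simp [h1]

theorem aux_no_max {n : ℕ} {U : Set (Fin n → ℝ)} (hU : IsOpen U) (g : (Fin n → ℝ) → ℝ)
    (hg : ContDiffOn ℝ 2 g U) (x : Fin n → ℝ) (hx : x ∈ U) (hmax : IsLocalMax g x)
    (e : Fin n → ℝ) : fderiv ℝ (fderiv ℝ g) x e e ≤ 0 := by
  by_contra hcon
  push Not at hcon
  set φ : ℝ → ℝ := fun t => g (x + t • e) with hφ
  have hline : ∀ t : ℝ, HasDerivAt (fun t : ℝ => x + t • e) e t := by
    intro t
    simpa using ((hasDerivAt_id t).smul_const e).const_add x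
  have hcl : Continuous (fun t : ℝ => x + t • e) := by fun_prop
  have hev : ∀ᶠ t in nhds (0 : ℝ), x + t • e ∈ U :=
    hcl.tendsto 0 |>.eventually (by simpa using hU.mem_nhds hx)
  have hd : ∀ᶠ t in nhds (0 : ℝ), deriv φ t = fderiv ℝ g (x + t • e) e := by
    filter_upwards [hev] with t ht
    have h1 : HasFDerivAt g (fderiv ℝ g (x + t • e)) (x + t • e) :=
      ((hg.differentiableOn (by norm_num)).differentiableAt (hU.mem_nhds ht)).hasFDerivAt
    exact (h1.comp_hasDerivAt t (hline t)).deriv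
  have hdd : HasDerivAt (fun t : ℝ => fderiv ℝ g (x + t • e) e)
      (fderiv ℝ (fderiv ℝ g) x e e) 0 := by
    have h1 : HasFDerivAt (fderiv ℝ g) (fderiv ℝ (fderiv ℝ g) x) (x + (0 : ℝ) • e) := by
      rw [zero_smul, add_zero]
      exact (((hg.fderiv_of_isOpen hU (m := 1) (by norm_num)).differentiableOn
        (by norm_num)).differentiableAt (hU.mem_nhds hx)).hasFDerivAt
    have h2 := h1.comp_hasDerivAt (0 : ℝ) (hline 0)
    have h3 := h2.clm_apply (hasDerivAt_const (0 : ℝ) e)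
    simpa using h3
  have hdd' : deriv (deriv φ) 0 = fderiv ℝ (fderiv ℝ g) x e e := by
    rw [Filter.EventuallyEq.deriv_eq (f := fun t : ℝ => fderiv ℝ g (x + t • e) e) hd]
    exact hdd.deriv
  have hmaxφ : IsLocalMax φ 0 := by
    have : Tendsto (fun t : ℝ => x + t • e) (nhds 0) (nhds x) := by
      simpa using hcl.tendsto 0
    have h2 := this.eventually hmax
    filter_upwards [h2] with t ht
    simpa [hφ] using ht
  have hcont : ContinuousAt φ 0 := by
    have h1 : ContinuousAt g (x + (0 : ℝ) • e) := by
      rw [zero_smul, add_zero]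
      exact hg.continuousOn.continuousAt (hU.mem_nhds hx)
    exact ContinuousAt.comp (f := fun t : ℝ => x + t • e) h1 hcl.continuousAt
  have hmin := isLocalMin_of_deriv_deriv_pos (by rw [hdd']; exact hcon) hmaxφ.deriv_eq_zero hcont
  have hconst : φ =ᶠ[nhds 0] fun _ => φ 0 := by
    filter_upwards [hmin, hmaxφ] with t h1 h2 using le_antisymm h2 h1
  have hz : deriv φ =ᶠ[nhds 0] fun _ => 0 := by
    have := hconst.deriv
    simpa using this
  have := hz.deriv_eq
  rw [hdd'] at this
  simp at this
  linarith

theorem aux_affine_hasFDerivAt {n : ℕ} (l : (Fin n → ℝ) →ᵃ[ℝ] ℝ) (y : Fin n → ℝ) :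
    HasFDerivAt (fun x => l x) (LinearMap.toContinuousLinearMap l.linear) y := by
  have h1 : (fun x => l x) = fun x => LinearMap.toContinuousLinearMap l.linear x + l 0 := by
    ext x
    have := congrFun l.decomp x
    simpa using this
  rw [h1]
  exact (ContinuousLinearMap.hasFDerivAt _).add_const _

theorem aux_quad_second {n : ℕ} {U : Set (Fin n → ℝ)} (hU : IsOpen U) (k M : ℝ)
    (l : (Fin n → ℝ) →ᵃ[ℝ] ℝ) (v : (Fin n → ℝ) → ℝ) (hv : ContDiffOn ℝ 2 v U)
    (x : Fin n → ℝ) (hx : x ∈ U) (e : Fin n → ℝ) :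
    ContDiffOn ℝ 2 (fun y => (k / 2 * ∑ i, y i ^ 2 - M) + v y - l y) U ∧
    fderiv ℝ (fderiv ℝ (fun y => (k / 2 * ∑ i, y i ^ 2 - M) + v y - l y)) x e e =
      k * (e ⬝ᵥ e) + fderiv ℝ (fderiv ℝ v) x e e := by
  have hl : ContDiff ℝ 2 (fun y => l y) := by
    have h1 : (fun x => l x) = fun x => LinearMap.toContinuousLinearMap l.linear x + l 0 := by
      ext x
      have := congrFun l.decomp x
      simpa using this
    rw [h1]
    fun_prop
  have hq : ContDiff ℝ 2 (fun y : Fin n → ℝ => (k / 2 * ∑ i, y i ^ 2 - M)) := by fun_prop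
  refine ⟨(hq.contDiffOn.add hv).sub hl.contDiffOn, ?_⟩
  let T : (Fin n → ℝ) →L[ℝ] ((Fin n → ℝ) →L[ℝ] ℝ) :=
    ∑ i, (ContinuousLinearMap.proj (R := ℝ) (φ := fun _ : Fin n => ℝ) i).smulRight
      (ContinuousLinearMap.proj (R := ℝ) (φ := fun _ : Fin n => ℝ) i)
  have hqd : ∀ y : Fin n → ℝ,
      HasFDerivAt (fun y : Fin n → ℝ => (k / 2 * ∑ i, y i ^ 2 - M)) (k • T y) y := by
    intro y
    have h1 : HasFDerivAt (fun y : Fin n → ℝ => ∑ i, y i ^ 2)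
        (∑ i, (2 * y i ^ 1) • (ContinuousLinearMap.proj (R := ℝ) (φ := fun _ : Fin n => ℝ) i)) y := by
      apply HasFDerivAt.fun_sum
      intro i _
      have h2 : HasFDerivAt (fun y : Fin n → ℝ => y i)
        (ContinuousLinearMap.proj (R := ℝ) (φ := fun _ : Fin n => ℝ) i) y :=
        (ContinuousLinearMap.proj (R := ℝ) (φ := fun _ : Fin n => ℝ) i).hasFDerivAt
      simpa using h2.pow 2
    have h3 := (h1.const_mul (k / 2)).sub_const M
    refine h3.congr_fderiv ?_
    ext z
    simp only [T, ContinuousLinearMap.smulRight_apply, _root_.sum_apply, _root_.smul_apply,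
      ContinuousLinearMap.proj_apply, smul_eq_mul, Finset.mul_sum]
    refine Finset.sum_congr rfl fun i _ => ?_
    ring
  have hfd : ∀ y ∈ U, fderiv ℝ (fun y => (k / 2 * ∑ i, y i ^ 2 - M) + v y - l y) y =
      k • T y + fderiv ℝ v y - LinearMap.toContinuousLinearMap l.linear := by
    intro y hy
    have hvd : HasFDerivAt v (fderiv ℝ v y) y :=
      ((hv.differentiableOn (by norm_num)).differentiableAt (hU.mem_nhds hy)).hasFDerivAt
    exact (((hqd y).add hvd).sub (aux_affine_hasFDerivAt l y)).fderiv
  have hev : fderiv ℝ (fun y => (k / 2 * ∑ i, y i ^ 2 - M) + v y - l y) =ᶠ[nhds x]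
      fun y => k • T y + fderiv ℝ v y - LinearMap.toContinuousLinearMap l.linear := by
    filter_upwards [hU.mem_nhds hx] with y hy using hfd y hy
  rw [hev.fderiv_eq]
  have hvdd : HasFDerivAt (fderiv ℝ v) (fderiv ℝ (fderiv ℝ v) x) x :=
    (((hv.fderiv_of_isOpen hU (m := 1) (by norm_num)).differentiableOn
        (by norm_num)).differentiableAt (hU.mem_nhds hx)).hasFDerivAt
  have h5 := (((T.hasFDerivAt (x := x)).const_smul k).add hvdd).sub_const
    (LinearMap.toContinuousLinearMap l.linear)
  have h6 : fderiv ℝ (fun y => k • T y + fderiv ℝ v y -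
      LinearMap.toContinuousLinearMap l.linear) x = k • T + fderiv ℝ (fderiv ℝ v) x := h5.fderiv
  rw [h6]
  simp [T, dotProduct]

theorem aux_quad_typeF {n : ℕ} (hn : 0 < n) {a c : ℝ} (hc : a ≤ n * Real.arctan c)
    {D : Set (Fin n → ℝ)} (hD : IsOpen D) (M : ℝ) :
    IsTypeF (Fc n a) D
      (fun x => (((c + 1) / 2 * ∑ i, x i ^ 2 - M : ℝ) : EReal)) := by
  refine ⟨fun x _ => EReal.coe_ne_top _, ?_, ?_⟩
  · have : Continuous (fun x : Fin n → ℝ => (((c + 1) / 2 * ∑ i, x i ^ 2 - M : ℝ) : EReal)) := by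
      apply continuous_coe_real_ereal.comp
      fun_prop
    exact this.upperSemicontinuous.upperSemicontinuousOn _
  · intro v hv hH l K hK hKD hfr x hx
    simp only [← EReal.coe_add, EReal.coe_le_coe_iff] at hfr ⊢
    set g : (Fin n → ℝ) → ℝ := fun y => ((c + 1) / 2 * ∑ i, y i ^ 2 - M) + v y - l y with hg
    have hgc : ContDiffOn ℝ 2 g D :=
      (aux_quad_second hD (c + 1) M l v hv x (hKD hx) 0).1
    obtain ⟨x0, hx0, hmax⟩ := hK.exists_isMaxOn ⟨x, hx⟩ (hgc.continuousOn.mono hKD)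
    by_cases hint : x0 ∈ interior K
    · exfalso
      have hloc : IsLocalMax g x0 := hmax.isLocalMax (mem_interior_iff_mem_nhds.1 hint)
      obtain ⟨e, he⟩ := aux_strict hn hc (hH x0 (hKD hx0))
      have h1 := aux_no_max hD g hgc x0 (hKD hx0) hloc e
      rw [(aux_quad_second hD (c + 1) M l v hv x0 (hKD hx0) e).2, ← aux_hess_quad] at h1
      linarith
    · have h1 := hfr x0 ⟨subset_closure hx0, hint⟩
      have h2 : g x ≤ g x0 := hmax hx
      simp only [hg] at h2
      linarith

theorem aux_tube {n : ℕ} (hn : 0 < n) {a : ℝ} (ha : ((n : ℝ) - 1) * π / 2 ≤ a)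
    {D : Set (Fin n → ℝ)} (hD : IsOpen D) (hDc : Convex ℝ D) (w : (Fin n → ℝ) → EReal)
    (hw : IsTypeF (Fc n a) D w) (x y : Fin n → ℝ) (hx : x ∈ D) (hy : y ∈ D) (hxy : x ≠ y)
    (s0 s1 : ℝ) (h0 : w x < s0) (h1 : w y < s1) (t : ℝ) (ht0 : 0 ≤ t) (ht1 : t ≤ 1) :
    w (x + t • (y - x)) ≤ ((s0 + t * (s1 - s0) : ℝ) : EReal) := by
  set e := y - x with he
  have he0 : e ≠ 0 := sub_ne_zero.2 hxy.symm
  have hee : 0 < e ⬝ᵥ e := by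
    rw [lt_iff_le_and_ne]
    refine ⟨Finset.sum_nonneg fun i _ => mul_self_nonneg _, fun h => he0 ?_⟩
    exact dotProduct_self_eq_zero.1 h.symm
  -- coordinate along the segment, and the residual
  set g : (Fin n → ℝ) → ℝ := fun ξ => (∑ i, (ξ i - x i) * e i) / (e ⬝ᵥ e) with hg
  set res : (Fin n → ℝ) → (Fin n → ℝ) := fun ξ i => ξ i - x i - g ξ * e i with hres
  set q : (Fin n → ℝ) → ℝ := fun ξ => ∑ i, (res ξ i) ^ 2 with hq
  have hgC : ContDiff ℝ 2 g := by simp only [hg]; fun_prop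
  have hresC : ∀ i, ContDiff ℝ 2 (fun ξ => res ξ i) := by
    intro i; simp only [hres]; fun_prop
  have hqC : ContDiff ℝ 2 q := by simp only [hq]; fun_prop
  have hginv : ∀ ξ (s : ℝ), g (ξ + s • e) = g ξ + s := by
    intro ξ s
    simp only [hg]
    rw [div_add' _ _ _ hee.ne']
    congr 1
    simp only [dotProduct, Finset.mul_sum, ← Finset.sum_add_distrib]
    refine Finset.sum_congr rfl fun i _ => ?_
    simp only [Pi.add_apply, Pi.smul_apply, smul_eq_mul]; ring
  have hqinv : ∀ ξ (s : ℝ), q (ξ + s • e) = q ξ := by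
    intro ξ s
    simp only [hq, hres, hginv]
    refine Finset.sum_congr rfl fun i _ => ?_
    simp only [Pi.add_apply, Pi.smul_apply, smul_eq_mul]; ring
  have hgx : g x = 0 := by simp [hg]
  have hqx : q x = 0 := by simp [hq, hres, hgx]
  have hseg : segment ℝ x y ⊆ D := hDc.segment_subset hx hy
  have hsegc : IsCompact (segment ℝ x y) := by
    rw [segment_eq_image']
    exact isCompact_Icc.image (by fun_prop)
  obtain ⟨δ, hδ, hδD⟩ := hsegc.exists_cthickening_subset_open hD hseg
  have hnx : ∃ r0 > 0, ∀ ξ ∈ Metric.ball x r0, w ξ < s0 := by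
    have := hw.2.1 x hx s0 h0
    rw [hD.nhdsWithin_eq hx] at this
    exact Metric.eventually_nhds_iff_ball.1 this
  have hny : ∃ r1 > 0, ∀ ξ ∈ Metric.ball y r1, w ξ < s1 := by
    have := hw.2.1 y hy s1 h1
    rw [hD.nhdsWithin_eq hy] at this
    exact Metric.eventually_nhds_iff_ball.1 this
  obtain ⟨r0, hr0, hb0⟩ := hnx
  obtain ⟨r1, hr1, hb1⟩ := hny
  obtain ⟨r, hr, hrδ, hrr0, hrr1⟩ : ∃ r > 0, r ≤ δ ∧ r < r0 ∧ r < r1 := by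
    refine ⟨min δ (min r0 r1) / 2, by positivity, ?_, ?_, ?_⟩
    · have := min_le_left δ (min r0 r1); linarith
    · have := min_le_right δ (min r0 r1); have := min_le_left r0 r1; linarith
    · have := min_le_right δ (min r0 r1); have := min_le_right r0 r1; linarith
  set K : Set (Fin n → ℝ) := {ξ | 0 ≤ g ξ ∧ g ξ ≤ 1 ∧ q ξ ≤ r ^ 2} with hKdef
  have hdist : ∀ ξ, q ξ ≤ r ^ 2 → dist ξ (x + g ξ • e) ≤ r := by
    intro ξ hξ
    rw [dist_pi_le_iff hr.le]
    intro i
    have h2 : res ξ i ^ 2 ≤ q ξ :=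
      Finset.single_le_sum (f := fun i => res ξ i ^ 2) (fun j _ => sq_nonneg _) (Finset.mem_univ i)
    have h3 := abs_le_of_sq_le_sq (h2.trans hξ) hr.le
    rw [Real.dist_eq]
    have h4 : ξ i - (x + g ξ • e) i = res ξ i := by
      simp only [hres, Pi.add_apply, Pi.smul_apply, smul_eq_mul]; ring
    rw [h4]
    exact h3
  have hKsub : K ⊆ Metric.cthickening r (segment ℝ x y) := by
    rintro ξ ⟨hξ0, hξ1, hξ2⟩
    refine Metric.mem_cthickening_of_dist_le ξ (x + g ξ • e) r _ ?_ (hdist ξ hξ2)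
    rw [segment_eq_image']
    exact ⟨g ξ, ⟨hξ0, hξ1⟩, rfl⟩
  have hKcl : IsClosed K :=
    (isClosed_le continuous_const hgC.continuous).inter
      ((isClosed_le hgC.continuous continuous_const).inter
        (isClosed_le hqC.continuous continuous_const))
  have hKc : IsCompact K :=
    hsegc.cthickening.of_isClosed_subset hKcl hKsub
  have hKD : K ⊆ D := hKsub.trans ((Metric.cthickening_mono hrδ _).trans hδD)
  have hxK : x ∈ K := ⟨hgx.ge, by rw [hgx]; norm_num, by rw [hqx]; positivity⟩
  obtain ⟨xm, hxm, hmax⟩ := UpperSemicontinuousOn.exists_isMaxOn ⟨x, hxK⟩ hKc (hw.2.1.mono hKD)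
  obtain ⟨M, hM⟩ : ∃ M : ℝ, ∀ ξ ∈ K, w ξ ≤ (M : EReal) := by
    refine ⟨(w xm).toReal, fun ξ hξ => ?_⟩
    exact (hmax hξ).trans (EReal.le_coe_toReal (hw.1 xm (hKD hxm)))
  set N : ℝ := |M - min s0 s1| / r ^ 2 with hN
  set V : (Fin n → ℝ) → ℝ := fun ξ => -N * q ξ with hV
  have hN0 : 0 ≤ N := by positivity
  have hVC : ContDiff ℝ 2 V := by simp only [hV]; fun_prop
  have hsub := hw.2.2 V hVC.contDiffOn (fun ξ _ =>
    aux_dual_invariant hn ha V hVC e he0 (fun ξ s => by simp only [hV, hqinv]) ξ)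
  -- the affine function
  let L : (Fin n → ℝ) →ₗ[ℝ] ℝ := ((s1 - s0) / (e ⬝ᵥ e)) • ∑ i, (e i) • LinearMap.proj i
  let l : (Fin n → ℝ) →ᵃ[ℝ] ℝ := L.toAffineMap + AffineMap.const ℝ _ (s0 - L x)
  have hl : ∀ ξ, l ξ = s0 + g ξ * (s1 - s0) := by
    intro ξ
    have h2 : l ξ = L ξ + (s0 - L x) := rfl
    have h3 : L ξ - L x = g ξ * (s1 - s0) := by
      rw [← map_sub]
      simp only [L, hg, LinearMap.smul_apply, LinearMap.sum_apply, LinearMap.proj_apply,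
        smul_eq_mul, Pi.sub_apply]
      rw [div_mul_eq_mul_div, div_mul_eq_mul_div, mul_comm]
      congr 2
      exact Finset.sum_congr rfl fun i _ => mul_comm _ _
    rw [h2]; linarith
  have hfin := hsub l K hKc hKD ?_ (x + t • e) ?_
  · have h2 : V (x + t • e) = 0 := by simp only [hV, hqinv, hqx, mul_zero]
    rw [hl, hginv, hgx, zero_add] at hfin
    simpa only [h2, EReal.coe_zero, add_zero] using hfin
  · intro ξ hξ
    have hξK : ξ ∈ K := hKcl.frontier_subset hξ
    obtain ⟨hg0, hg1, hqr⟩ := hξK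
    have hq0 : 0 ≤ q ξ := Finset.sum_nonneg fun i _ => sq_nonneg _
    have hV0 : V ξ ≤ 0 := by
      simp only [hV]; have := mul_nonneg hN0 hq0; linarith
    have hcases : g ξ = 0 ∨ g ξ = 1 ∨ q ξ = r ^ 2 := by
      by_contra hcon
      push Not at hcon
      obtain ⟨c0, c1, c2⟩ := hcon
      apply hξ.2
      have hop : IsOpen {ξ | 0 < g ξ ∧ g ξ < 1 ∧ q ξ < r ^ 2} :=
        (isOpen_lt continuous_const hgC.continuous).inter
          ((isOpen_lt hgC.continuous continuous_const).inter
            (isOpen_lt hqC.continuous continuous_const))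
      refine interior_maximal ?_ hop
        ⟨lt_of_le_of_ne hg0 c0.symm, lt_of_le_of_ne hg1 c1, lt_of_le_of_ne hqr c2⟩
      exact fun z hz => ⟨hz.1.le, hz.2.1.le, hz.2.2.le⟩
    have hd := hdist ξ hqr
    have hgoal : ∀ B : ℝ, w ξ ≤ (B : EReal) → B + V ξ ≤ l ξ →
        w ξ + ((V ξ : ℝ) : EReal) ≤ ((l ξ : ℝ) : EReal) := by
      intro B hB hB2
      calc w ξ + ((V ξ : ℝ) : EReal) ≤ (B : EReal) + ((V ξ : ℝ) : EReal) := by gcongr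
        _ = ((B + V ξ : ℝ) : EReal) := by rw [EReal.coe_add]
        _ ≤ _ := by exact_mod_cast hB2
    rcases hcases with hc | hc | hc
    · rw [hc, zero_smul, add_zero] at hd
      refine hgoal s0 (hb0 ξ (lt_of_le_of_lt hd hrr0)).le ?_
      rw [hl, hc]; linarith
    · rw [hc, one_smul, he, add_sub_cancel] at hd
      refine hgoal s1 (hb1 ξ (lt_of_le_of_lt hd hrr1)).le ?_
      rw [hl, hc]; linarith
    · refine hgoal M (hM ξ ⟨hg0, hg1, hqr⟩) ?_
      have h2 : V ξ = -|M - min s0 s1| := by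
        simp only [hV, hc, hN]; field_simp
      have h3 := le_abs_self (M - min s0 s1)
      have h4 : min s0 s1 ≤ l ξ := by
        rw [hl]
        have := min_le_left s0 s1
        have := min_le_right s0 s1
        nlinarith
      linarith
  · refine ⟨?_, ?_, ?_⟩
    · rw [hginv, hgx]; linarith
    · rw [hginv, hgx]; linarith
    · rw [hqinv, hqx]; positivity

theorem aux_maxprinciple {n : ℕ} (hn : 0 < n) {a : ℝ} (ha : ((n : ℝ) - 1) * π / 2 ≤ a)
    {D : Set (Fin n → ℝ)} (hD : IsOpen D) (hDb : Bornology.IsBounded D)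
    (w : (Fin n → ℝ) → EReal) (hw : IsTypeF (Fc n a) D w) (b : (Fin n → ℝ) →ᵃ[ℝ] ℝ)
    (hb : ∀ y ∈ frontier D, limsup w (nhdsWithin y D) ≤ (b y : EReal)) (ε : ℝ) (hε : 0 < ε) :
    ∀ x ∈ D, w x ≤ ((b x + ε : ℝ) : EReal) := by
  have hbc : Continuous (fun x => b x) := b.continuous_of_finiteDimensional
  set S : Set (Fin n → ℝ) := {x | x ∈ D → w x < ((b x + ε : ℝ) : EReal)} with hS
  have hfS : frontier D ⊆ interior S := by
    intro y hy
    rw [mem_interior_iff_mem_nhds]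
    have h1 : limsup w (nhdsWithin y D) < ((b y + ε / 2 : ℝ) : EReal) :=
      (hb y hy).trans_lt (by exact_mod_cast (by linarith : b y < b y + ε / 2))
    have h2 := eventually_nhdsWithin_iff.1 (eventually_lt_of_limsup_lt h1)
    have h3 : ∀ᶠ z in nhds y, b y + ε / 2 < b z + ε := by
      have : Continuous (fun z => b z + ε) := by fun_prop
      exact this.tendsto y |>.eventually (lt_mem_nhds (by linarith))
    filter_upwards [h2, h3] with z hz1 hz2 hzD
    exact (hz1 hzD).trans (by exact_mod_cast hz2)
  have hfc : IsCompact (frontier D) :=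
    hDb.isCompact_closure.of_isClosed_subset isClosed_frontier frontier_subset_closure
  obtain ⟨δ, hδ, hδS⟩ := hfc.exists_cthickening_subset_open isOpen_interior hfS
  set K := closure D \ Metric.thickening δ (frontier D) with hK
  have hKcl : IsClosed K := isClosed_closure.sdiff Metric.isOpen_thickening
  have hKc : IsCompact K := hDb.isCompact_closure.of_isClosed_subset hKcl Set.sdiff_subset
  have hKD : K ⊆ D := by
    rintro z ⟨hz1, hz2⟩
    by_contra hzD
    apply hz2
    apply Metric.self_subset_thickening hδ
    rw [hD.frontier_eq]
    exact ⟨hz1, hzD⟩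
  have h0 : ContDiff ℝ 2 (fun _ : Fin n → ℝ => (0 : ℝ)) := contDiff_const
  have he0 : (fun _ => 1 : Fin n → ℝ) ≠ 0 := by
    intro h
    have := congrFun h ⟨0, hn⟩
    simp at this
  have hsub := hw.2.2 (fun _ => 0) h0.contDiffOn (fun ξ _ =>
    aux_dual_invariant hn ha _ h0 _ he0 (fun _ _ => rfl) ξ)
    (b + AffineMap.const ℝ _ ε) K hKc hKD
  have hb2 : ∀ x, (b + AffineMap.const ℝ (Fin n → ℝ) ε) x = b x + ε := fun x => rfl
  simp only [EReal.coe_zero, add_zero, hb2] at hsub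
  have hsub2 := hsub ?_
  · intro x hx
    by_cases hxK : x ∈ K
    · exact hsub2 x hxK
    · have hxt : x ∈ Metric.thickening δ (frontier D) := by
        by_contra h
        exact hxK ⟨subset_closure hx, h⟩
      exact (interior_subset (hδS (Metric.thickening_subset_cthickening _ _ hxt)) hx).le
  · intro x hx
    have hxK := hKcl.frontier_subset hx
    have hxc : x ∈ Metric.cthickening δ (frontier D) := by
      by_contra hcon
      apply hx.2
      have hop : IsOpen (D ∩ (Metric.cthickening δ (frontier D))ᶜ) :=
        hD.inter Metric.isClosed_cthickening.isOpen_compl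
      refine interior_maximal ?_ hop ⟨hKD hxK, hcon⟩
      rintro z ⟨hz1, hz2⟩
      exact ⟨subset_closure hz1, fun h => hz2 (Metric.thickening_subset_cthickening _ _ h)⟩
    exact (interior_subset (hδS hxc) (hKD hxK)).le

theorem aux_barrier {n : ℕ} {D : Set (Fin n → ℝ)} (hD : IsOpen D)
    (hDb : Bornology.IsBounded D) (hDconv : Convex ℝ D)
    (hDstrict : ∀ x ∈ frontier D, ∀ y ∈ frontier D, x ≠ y → ¬ segment ℝ x y ⊆ frontier D)
    (f : (Fin n → ℝ) → ℝ) (hf : ContinuousOn f (frontier D))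
    (y : Fin n → ℝ) (hy : y ∈ frontier D) (ε : ℝ) (hε : 0 < ε) :
    ∃ b : (Fin n → ℝ) →ᵃ[ℝ] ℝ, b y = f y + ε ∧ ∀ z ∈ frontier D, f z ≤ b z := by
  have hyD : y ∉ D := by
    rw [hD.frontier_eq] at hy; exact hy.2
  obtain ⟨φ, hφ⟩ := geometric_hahn_banach_open_point hDconv hD hyD
  have hφc : ∀ z ∈ closure D, φ z ≤ φ y := by
    have hcl : IsClosed {z | φ z ≤ φ y} := isClosed_le φ.continuous continuous_const
    exact closure_minimal (fun z hz => (hφ z hz).le) hcl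
  have hφs : ∀ z ∈ frontier D, z ≠ y → φ z < φ y := by
    intro z hz hzy
    refine lt_of_le_of_ne (hφc z (frontier_subset_closure hz)) fun heq => ?_
    apply hDstrict z hz y hy hzy
    intro s hs
    have hsc : s ∈ closure D := hDconv.closure.segment_subset (frontier_subset_closure hz)
      (frontier_subset_closure hy) hs
    rw [hD.frontier_eq]
    refine ⟨hsc, fun hsD => ?_⟩
    have h1 := hφ s hsD
    obtain ⟨α, β, hα, hβ, hαβ, rfl⟩ := hs
    rw [map_add, map_smul, map_smul, heq, ← add_smul, hαβ, one_smul] at h1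
    exact lt_irrefl _ h1
  have hfc : IsCompact (frontier D) :=
    hDb.isCompact_closure.of_isClosed_subset isClosed_frontier frontier_subset_closure
  have hnear : ∀ᶠ z in nhds y, z ∈ frontier D → f z < f y + ε := by
    have := (hf y hy).eventually (gt_mem_nhds (by linarith : f y < f y + ε))
    exact eventually_nhdsWithin_iff.1 this
  obtain ⟨U, hU, hUo, hyU⟩ := mem_nhds_iff.1 hnear
  have hFc : IsCompact (frontier D \ U) := hfc.diff hUo
  have hFne : ∀ z ∈ frontier D \ U, φ z < φ y := by
    rintro z ⟨hz1, hz2⟩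
    exact hφs z hz1 (fun h => hz2 (h ▸ hyU))
  have hcont : ContinuousOn (fun z => (f z - f y - ε) / (φ y - φ z)) (frontier D \ U) := by
    refine ContinuousOn.div ?_ ?_ ?_
    · exact ((hf.mono Set.sdiff_subset).sub continuousOn_const).sub continuousOn_const
    · exact (continuous_const.sub φ.continuous).continuousOn
    · intro z hz
      have := hFne z hz
      exact (by linarith : 0 < φ y - φ z).ne'
  obtain ⟨C, hC⟩ := hFc.bddAbove_image hcont
  let L : (Fin n → ℝ) →ₗ[ℝ] ℝ := (-(max C 0)) • (φ : (Fin n → ℝ) →ₗ[ℝ] ℝ)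
  let b : (Fin n → ℝ) →ᵃ[ℝ] ℝ := L.toAffineMap + AffineMap.const ℝ _ (f y + ε + max C 0 * φ y)
  have hb : ∀ z, b z = f y + ε + max C 0 * (φ y - φ z) := by
    intro z
    have h1 : b z = -(max C 0) * φ z + (f y + ε + max C 0 * φ y) := rfl
    rw [h1]; ring
  refine ⟨b, by rw [hb]; ring, fun z hz => ?_⟩
  rw [hb]
  have h0 : 0 ≤ φ y - φ z := by
    have := hφc z (frontier_subset_closure hz); linarith
  by_cases hzU : z ∈ U
  · have h1 : f z < f y + ε := hU hzU hz
    have := mul_nonneg (le_max_right C 0) h0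
    linarith
  · have h1 := hC ⟨z, ⟨hz, hzU⟩, rfl⟩
    have h2 : 0 < φ y - φ z := by
      have := hFne z ⟨hz, hzU⟩; linarith
    simp only at h1
    rw [div_le_iff₀ h2] at h1
    have := mul_le_mul_of_nonneg_right (le_max_left C 0) h0
    linarith

/-- The conclusions that follow once the envelope is known to be convex and a candidate. -/
theorem aux_usc {n : ℕ} {D : Set (Fin n → ℝ)} (hD : IsOpen D)
    (P : (Fin n → ℝ) → EReal) (p : (Fin n → ℝ) → ℝ) (hp : ∀ x ∈ D, P x = (p x : EReal))
    (hpc : ContinuousOn p D) :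
    (∀ x ∈ D, limsup P (nhds x) = P x) ∧ UpperSemicontinuousOn P D := by
  have hcont : ∀ x ∈ D, ContinuousAt P x := by
    intro x hx
    have h1 : ContinuousAt (fun z => (p z : EReal)) x :=
      continuous_coe_real_ereal.continuousAt.comp (hpc.continuousAt (hD.mem_nhds hx))
    refine h1.congr ?_
    filter_upwards [hD.mem_nhds hx] with z hz using (hp z hz).symm
  refine ⟨fun x hx => (hcont x hx).tendsto.limsup_eq, fun x hx => ?_⟩
  exact (hcont x hx).continuousWithinAt.upperSemicontinuousWithinAt

theorem aux_typeF_sup {n : ℕ} {F : Set (Matrix (Fin n) (Fin n) ℝ)} {D : Set (Fin n → ℝ)}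
    (Cand : Set ((Fin n → ℝ) → EReal)) (hC : ∀ w ∈ Cand, IsTypeF F D w)
    (P : (Fin n → ℝ) → EReal) (hP : P = fun x => ⨆ w ∈ Cand, w x)
    (htop : ∀ x ∈ D, P x ≠ ⊤) (husc : UpperSemicontinuousOn P D) : IsTypeF F D P := by
  have hle : ∀ w ∈ Cand, ∀ x, w x ≤ P x := by
    intro w hw x
    rw [hP]
    exact le_iSup₂ (f := fun w (_ : w ∈ Cand) => w x) w hw
  refine ⟨htop, husc, fun v hv hH l K hK hKD hfr x hx => ?_⟩
  have key : P x ≤ ((l x - v x : ℝ) : EReal) := by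
    rw [hP]
    refine iSup₂_le fun w hw => ?_
    have h1 := (hC w hw).2.2 v hv hH l K hK hKD
      (fun z hz => (add_le_add_left (hle w hw z) _).trans (hfr z hz)) x hx
    rw [EReal.coe_sub]
    exact EReal.le_sub_iff_add_le (Or.inl (EReal.coe_ne_bot _)) (Or.inl (EReal.coe_ne_top _)) |>.2 h1
  calc P x + ((v x : ℝ) : EReal) ≤ ((l x - v x : ℝ) : EReal) + ((v x : ℝ) : EReal) := by gcongr
    _ = ((l x : ℝ) : EReal) := by rw [← EReal.coe_add]; congr 1; ring

/-- **Properties of the obstacle envelope.**  Let `D ⊂ ℝⁿ` be a bounded strictly convex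
domain, `a ∈ [(n−1)π/2, nπ/2)`, `v ∈ C⁰(D̄)` and `f ∈ C⁰(∂D)`.  Define
`P(v;f) := sup{w ∈ F_a(D) : w ≤ v on D, limsup_{ξ→y} w(ξ) ≤ f(y) for all y ∈ ∂D}` and
assume the candidate family is nonempty.  Then `P(v;f)` equals its upper semicontinuous
regularization, `P(v;f) ∈ F_a(D)`, `P(v;f)` is (real-valued,) convex and continuous on
`D`, and `P(v;f)` is itself a candidate in its own defining family. -/
theorem envelope_properties (n : ℕ) (a : ℝ)
    (ha : ((n : ℝ) - 1) * π / 2 ≤ a) (ha' : a < (n : ℝ) * π / 2)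
    (D : Set (Fin n → ℝ)) (hDopen : IsOpen D) (hDconn : IsConnected D)
    (hDbdd : Bornology.IsBounded D) (hDconv : Convex ℝ D)
    (hDstrict : ∀ x ∈ frontier D, ∀ y ∈ frontier D, x ≠ y →
      ¬ segment ℝ x y ⊆ frontier D)
    (v : (Fin n → ℝ) → ℝ) (hv : ContinuousOn v (closure D))
    (f : (Fin n → ℝ) → ℝ) (hf : ContinuousOn f (frontier D))
    (Cand : Set ((Fin n → ℝ) → EReal))
    (hCand : Cand = {w | IsTypeF (Fc n a) D w ∧ (∀ x ∈ D, w x ≤ (v x : EReal)) ∧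
      ∀ y ∈ frontier D, Filter.limsup w (nhdsWithin y D) ≤ (f y : EReal)})
    (hne : Cand.Nonempty)
    (P : (Fin n → ℝ) → EReal) (hP : P = fun x => ⨆ w ∈ Cand, w x) :
    (∀ x ∈ D, Filter.limsup P (nhds x) = P x) ∧
    IsTypeF (Fc n a) D P ∧
    (∃ p : (Fin n → ℝ) → ℝ, (∀ x ∈ D, P x = (p x : EReal)) ∧
      ContinuousOn p D ∧ ConvexOn ℝ D p) ∧
    (∀ x ∈ D, P x ≤ (v x : EReal)) ∧
    (∀ y ∈ frontier D, Filter.limsup P (nhdsWithin y D) ≤ (f y : EReal)) := by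
  have hCmem : ∀ w, w ∈ Cand ↔ (IsTypeF (Fc n a) D w ∧ (∀ x ∈ D, w x ≤ (v x : EReal)) ∧
      ∀ y ∈ frontier D, Filter.limsup w (nhdsWithin y D) ≤ (f y : EReal)) := by
    intro w; rw [hCand]; rfl
  have hle : ∀ w ∈ Cand, ∀ x, w x ≤ P x := by
    intro w hw x
    rw [hP]
    exact le_iSup₂ (f := fun w (_ : w ∈ Cand) => w x) w hw
  have hPv : ∀ x ∈ D, P x ≤ (v x : EReal) := by
    intro x hx
    rw [hP]
    exact iSup₂_le fun w hw => ((hCmem w).1 hw).2.1 x hx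
  have htop : ∀ x ∈ D, P x ≠ ⊤ := fun x hx =>
    ((hPv x hx).trans_lt (EReal.coe_lt_top _)).ne
  have hfc : IsCompact (frontier D) :=
    hDbdd.isCompact_closure.of_isClosed_subset isClosed_frontier frontier_subset_closure
  -- a finite candidate
  have hreal : ∃ w0 ∈ Cand, ∀ x, w0 x ≠ ⊥ := by
    rcases Nat.eq_zero_or_pos n with hn | hn
    · subst hn
      refine ⟨fun x => (v x : EReal), (hCmem _).2 ⟨⟨fun x _ => EReal.coe_ne_top _, ?_, ?_⟩,
        fun x _ => le_rfl, ?_⟩, fun x => EReal.coe_ne_bot _⟩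
      · exact (continuous_of_discreteTopology (f := fun x : Fin 0 → ℝ =>
          (v x : EReal))).upperSemicontinuous.upperSemicontinuousOn _
      · intro u _ hu
        exfalso
        obtain ⟨x, hx⟩ := hDconn.nonempty
        apply (hu x hx).2
        have hall : ∀ B : Matrix (Fin 0) (Fin 0) ℝ, B.IsSymm := fun B => by
          ext i; exact i.elim0
        refine ⟨hall _, Eventually.of_forall fun B hB => ⟨hB, ?_⟩⟩
        have : liftedAngle B = 0 := by
          unfold liftedAngle
          split_ifs <;> simp
        rw [this]
        simp at ha'
        exact ha'.le
      · intro y hy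
        have hDu : D = Set.univ := by
          obtain ⟨x, hx⟩ := hDconn.nonempty
          ext z
          simp only [Set.mem_univ, iff_true]
          rwa [Subsingleton.elim z x]
        rw [hDu] at hy
        simp at hy
    · obtain ⟨c, hc⟩ := aux_exists_C hn ha ha'
      have hqc : Continuous (fun x : Fin n → ℝ => (c + 1) / 2 * ∑ i, x i ^ 2) := by fun_prop
      obtain ⟨M1, hM1⟩ := hDbdd.isCompact_closure.bddAbove_image
        (f := fun x => (c + 1) / 2 * ∑ i, x i ^ 2 - v x) (hqc.continuousOn.sub hv)
      obtain ⟨M2, hM2⟩ := hfc.bddAbove_image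
        (f := fun x => (c + 1) / 2 * ∑ i, x i ^ 2 - f x) (hqc.continuousOn.sub hf)
      refine ⟨fun x => (((c + 1) / 2 * ∑ i, x i ^ 2 - max M1 M2 : ℝ) : EReal),
        (hCmem _).2 ⟨aux_quad_typeF hn hc hDopen _, ?_, ?_⟩, fun x => EReal.coe_ne_bot _⟩
      · intro x hx
        have h1 := hM1 ⟨x, subset_closure hx, rfl⟩
        simp only at h1
        have := le_max_left M1 M2
        exact_mod_cast (by linarith)
      · intro y hy
        have h1 := hM2 ⟨y, hy, rfl⟩
        simp only at h1
        have := le_max_right M1 M2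
        have hcont : Continuous (fun x : Fin n → ℝ =>
            (((c + 1) / 2 * ∑ i, x i ^ 2 - max M1 M2 : ℝ) : EReal)) :=
          continuous_coe_real_ereal.comp (hqc.sub continuous_const)
        have hnb : (nhdsWithin y D).NeBot :=
          mem_closure_iff_nhdsWithin_neBot.1 (frontier_subset_closure hy)
        rw [((hcont.tendsto y).mono_left nhdsWithin_le_nhds).limsup_eq]
        exact_mod_cast (by linarith)
  obtain ⟨w0, hw0, hw0b⟩ := hreal
  have hbot : ∀ x, P x ≠ ⊥ := fun x h => hw0b x (le_bot_iff.1 (h ▸ hle w0 hw0 x))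
  have hp : ∀ x ∈ D, P x = ((P x).toReal : EReal) := fun x hx =>
    (EReal.coe_toReal (htop x hx) (hbot x)).symm
  have hconv : ConvexOn ℝ D (fun x => (P x).toReal) := by
    refine ⟨hDconv, fun x hx y hy α β hα hβ hαβ => ?_⟩
    simp only [smul_eq_mul]
    by_cases hxy : x = y
    · subst hxy
      rw [← add_smul, hαβ, one_smul, ← add_mul, hαβ, one_mul]
    have hn : 0 < n := by
      rcases Nat.eq_zero_or_pos n with hn | hn
      · subst hn; exact absurd (Subsingleton.elim x y) hxy
      · exact hn
    have hz : α • x + β • y ∈ D := hDconv hx hy hα hβ hαβ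
    have hz2 : α • x + β • y = x + β • (y - x) := by
      have : α = 1 - β := by linarith
      rw [this]; module
    refine le_of_forall_pos_le_add fun ε hε => ?_
    have h1 : P (α • x + β • y) ≤ (((P x).toReal + ε +
        β * (((P y).toReal + ε) - ((P x).toReal + ε)) : ℝ) : EReal) := by
      rw [hz2]
      conv_lhs => rw [hP]
      refine iSup₂_le fun w hw => ?_
      refine aux_tube hn ha hDopen hDconv w ((hCmem w).1 hw).1 x y hx hy hxy _ _ ?_ ?_ β hβ
        (by linarith)
      · refine ((hle w hw x).trans (hp x hx).le).trans_lt ?_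
        exact_mod_cast (by linarith)
      · refine ((hle w hw y).trans (hp y hy).le).trans_lt ?_
        exact_mod_cast (by linarith)
    rw [hp _ hz, EReal.coe_le_coe_iff] at h1
    have hα' : α = 1 - β := by linarith
    have h2 : α * (P x).toReal = (1 - β) * (P x).toReal := by rw [hα']
    linarith
  have hcont : ContinuousOn (fun x => (P x).toReal) D := hconv.continuousOn hDopen
  obtain ⟨hlim, husc⟩ := aux_usc hDopen P _ hp hcont
  refine ⟨hlim, aux_typeF_sup Cand (fun w hw => ((hCmem w).1 hw).1) P hP htop husc,
    ⟨_, hp, hcont, hconv⟩, hPv, ?_⟩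
  intro y hy
  have hn : 0 < n := by
    rcases Nat.eq_zero_or_pos n with hn | hn
    · subst hn
      exfalso
      have hDu : D = Set.univ := by
        obtain ⟨x, hx⟩ := hDconn.nonempty
        ext z
        simp only [Set.mem_univ, iff_true]
        rwa [Subsingleton.elim z x]
      rw [hDu] at hy
      simp at hy
    · exact hn
  refine EReal.le_of_forall_lt_iff_le.1 fun r hr => ?_
  have hr' : f y < r := by exact_mod_cast hr
  set ε := (r - f y) / 3 with hε
  have hε0 : 0 < ε := by rw [hε]; linarith
  obtain ⟨b, hby, hbf⟩ := aux_barrier hDopen hDbdd hDconv hDstrict f hf y hy ε hε0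
  have hPb : ∀ x ∈ D, P x ≤ ((b x + ε : ℝ) : EReal) := by
    intro x hx
    rw [hP]
    refine iSup₂_le fun w hw => ?_
    obtain ⟨hw1, -, hw3⟩ := (hCmem w).1 hw
    exact aux_maxprinciple hn ha hDopen hDbdd w hw1 b
      (fun z hz => (hw3 z hz).trans (by exact_mod_cast hbf z hz)) ε hε0 x hx
  refine limsup_le_of_le (h := ?_)
  have hbc : Continuous (fun z => b z + ε) :=
    b.continuous_of_finiteDimensional.add continuous_const
  have hev : ∀ᶠ z in nhdsWithin y D, b z + ε < r :=
    ((hbc.tendsto y).mono_left nhdsWithin_le_nhds).eventually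
      (gt_mem_nhds (by rw [hby]; linarith))
  filter_upwards [hev, self_mem_nhdsWithin] with z hz hzD
  exact (hPb z hzD).trans (by exact_mod_cast hz.le)
end
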